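/- Assume Φ̂_{,1}(1,…,1) = 0. Let r_c ∈ C²((0,1]) ∩ C([0,1]) with r_c' > 0 solve the modified equilibrium equation on (0,1) with r_c(0) > 0 and lim_{R→0⁺} T̂(r_c(R)) = 0. Then r_c extends to a solution of the modified equilibrium equation on (0,∞) satisfying r_c'(R) < r_c(R)/R for all R ∈ (0,∞); this extended solution is unique up to the scaling below (it does not depend on the value r_c(1)); there exists λ_c > 1 with lim_{R→∞} r_c'(R) = lim_{R→∞} r_c(R)/R = λ_c; and if r_λ is any solution of the modified equilibrium equation on (0,1] with lim_{R→0⁺} T̂(r_λ(R)) = 0 and r_λ(1) = λ for some λ > λ_c, then r_λ(R) = r_c(αR)/α for all R ∈ (0,1], where α is the unique solution of r_c(α)/α = λ. -/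

import Mathlib

open Real MeasureTheory Filter Set
open scoped ENNReal NNReal

noncomputable section

/-- Radial stored energy `Φ(q, v, …, v) = (κ/n)(qⁿ + (n−1)vⁿ) + h(q v^{n−1})`,
the restriction of `Φ(v₁,…,vₙ) = (κ/n)(v₁ⁿ+⋯+vₙⁿ) + h(v₁⋯vₙ)` to points
`(q, v, …, v)`. -/
def Phi (n : ℕ) (κ : ℝ) (h : ℝ → ℝ) (q v : ℝ) : ℝ :=
  (κ / n) * (q ^ n + ((n : ℝ) - 1) * v ^ n) + h (q * v ^ (n - 1))

/-- `Φ_{,1}(q, v, …, v) = κ q^{n−1} + v^{n−1} h'(q v^{n−1})`. -/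
def Phi1 (n : ℕ) (κ : ℝ) (h' : ℝ → ℝ) (q v : ℝ) : ℝ :=
  κ * q ^ (n - 1) + v ^ (n - 1) * h' (q * v ^ (n - 1))

/-- `Φ_{,2}(q, v, …, v) = κ v^{n−1} + q v^{n−2} h'(q v^{n−1})`. -/
def Phi2 (n : ℕ) (κ : ℝ) (h' : ℝ → ℝ) (q v : ℝ) : ℝ :=
  κ * v ^ (n - 1) + q * v ^ (n - 2) * h' (q * v ^ (n - 1))

/-- Radial Cauchy stress `T(q,v) = v^{1−n} Φ_{,1}(q,v,…,v) = κ(q/v)^{n−1} + h'(q v^{n−1})`. -/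
def Tstress (n : ℕ) (κ : ℝ) (h' : ℝ → ℝ) (q v : ℝ) : ℝ :=
  κ * (q / v) ^ (n - 1) + h' (q * v ^ (n - 1))

/-- The determinant function `δ(R) = r'(R) (r(R)/R)^{n−1}`. -/
def del (n : ℕ) (r r' : ℝ → ℝ) (R : ℝ) : ℝ :=
  r' R * (r R / R) ^ (n - 1)

/-- Hypotheses on `h : (0,∞) → [0,∞)`: it is `C²` with derivative `h'` and second
derivative `h''`, `h'' > 0`, `h(d) → ∞` as `d → 0⁺`, `h(d)/d → ∞` as `d → ∞`,
`h'(d) → −∞` as `d → 0⁺` and `h'(d) → ∞` as `d → ∞`. -/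
structure GoodH (h h' h'' : ℝ → ℝ) : Prop where
  nonneg : ∀ d : ℝ, 0 < d → 0 ≤ h d
  deriv1 : ∀ d : ℝ, 0 < d → HasDerivAt h (h' d) d
  deriv2 : ∀ d : ℝ, 0 < d → HasDerivAt h' (h'' d) d
  cont2 : ContinuousOn h'' (Set.Ioi 0)
  hpp_pos : ∀ d : ℝ, 0 < d → 0 < h'' d
  lim_zero : Tendsto h (nhdsWithin 0 (Set.Ioi 0)) atTop
  lim_growth : Tendsto (fun d => h d / d) atTop atTop
  dlim_zero : Tendsto h' (nhdsWithin 0 (Set.Ioi 0)) atBot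
  dlim_top : Tendsto h' atTop atTop

/-- `r ∈ C²((0,1])`, with `r, r' > 0` on `(0,1]`, solving the radial equilibrium
equation `(d/dR)[R^{n−1} Φ_{,1}(r(R))] = (n−1) R^{n−2} Φ_{,2}(r(R))`. -/
structure RadialSol (n : ℕ) (κ : ℝ) (h' : ℝ → ℝ) (r r' r'' : ℝ → ℝ) : Prop where
  pos : ∀ R ∈ Set.Ioc (0:ℝ) 1, 0 < r R
  derivPos : ∀ R ∈ Set.Ioc (0:ℝ) 1, 0 < r' R
  hasDeriv : ∀ R ∈ Set.Ioc (0:ℝ) 1, HasDerivWithinAt r (r' R) (Set.Ioc 0 1) R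
  hasDeriv2 : ∀ R ∈ Set.Ioc (0:ℝ) 1, HasDerivWithinAt r' (r'' R) (Set.Ioc 0 1) R
  cont2 : ContinuousOn r'' (Set.Ioc 0 1)
  equil : ∀ R ∈ Set.Ioc (0:ℝ) 1,
    HasDerivWithinAt (fun s => s ^ (n - 1) * Phi1 n κ h' (r' s) (r s / s))
      (((n : ℝ) - 1) * R ^ (n - 2) * Phi2 n κ h' (r' R) (r R / R)) (Set.Ioc 0 1) R


/-- Modified radial stored energy
`Φ̂(q,v,…,v) = (κ/n)qⁿ + h(q v^{n−1}) + κ q v^{n−1}((n−1)/n + ln(v^{n−1}))`. -/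
def PhiHat (n : ℕ) (κ : ℝ) (h : ℝ → ℝ) (q v : ℝ) : ℝ :=
  (κ / n) * q ^ n + h (q * v ^ (n - 1)) +
    κ * (q * v ^ (n - 1)) * (((n : ℝ) - 1) / n + ((n : ℝ) - 1) * Real.log v)

/-- `Φ̂_{,1}(q,v,…,v) = κ q^{n−1} + v^{n−1} h'(q v^{n−1}) + κ v^{n−1}((n−1)/n + (n−1) ln v)`. -/
def PhiHat1 (n : ℕ) (κ : ℝ) (h' : ℝ → ℝ) (q v : ℝ) : ℝ :=
  κ * q ^ (n - 1) + v ^ (n - 1) * h' (q * v ^ (n - 1)) +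
    κ * v ^ (n - 1) * (((n : ℝ) - 1) / n + ((n : ℝ) - 1) * Real.log v)

/-- `Φ̂_{,2}(q,v,…,v) = q v^{n−2}(h'(q v^{n−1}) + κ + κ(n−1)(1/n + ln v))`. -/
def PhiHat2 (n : ℕ) (κ : ℝ) (h' : ℝ → ℝ) (q v : ℝ) : ℝ :=
  q * v ^ (n - 2) *
    (h' (q * v ^ (n - 1)) + κ + κ * (((n : ℝ) - 1) * (1 / n + Real.log v)))

/-- Modified radial Cauchy stress
`T̂(q,v) = κ(q/v)^{n−1} + h'(q v^{n−1}) + (n−1)κ(1/n + ln v)`. -/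
def THat (n : ℕ) (κ : ℝ) (h' : ℝ → ℝ) (q v : ℝ) : ℝ :=
  κ * (q / v) ^ (n - 1) + h' (q * v ^ (n - 1)) +
    ((n : ℝ) - 1) * κ * (1 / n + Real.log v)

/-- `r ∈ C²((0,1])`, with `r, r' > 0` on `(0,1]`, solving the modified radial
equilibrium equation `(d/dR)[R^{n−1} Φ̂_{,1}(r(R))] = (n−1) R^{n−2} Φ̂_{,2}(r(R))`. -/
structure ModRadialSol (n : ℕ) (κ : ℝ) (h' : ℝ → ℝ) (r r' r'' : ℝ → ℝ) : Prop where
  pos : ∀ R ∈ Set.Ioc (0:ℝ) 1, 0 < r R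
  derivPos : ∀ R ∈ Set.Ioc (0:ℝ) 1, 0 < r' R
  hasDeriv : ∀ R ∈ Set.Ioc (0:ℝ) 1, HasDerivWithinAt r (r' R) (Set.Ioc 0 1) R
  hasDeriv2 : ∀ R ∈ Set.Ioc (0:ℝ) 1, HasDerivWithinAt r' (r'' R) (Set.Ioc 0 1) R
  cont2 : ContinuousOn r'' (Set.Ioc 0 1)
  equil : ∀ R ∈ Set.Ioc (0:ℝ) 1,
    HasDerivWithinAt (fun s => s ^ (n - 1) * PhiHat1 n κ h' (r' s) (r s / s))
      (((n : ℝ) - 1) * R ^ (n - 2) * PhiHat2 n κ h' (r' R) (r R / R)) (Set.Ioc 0 1) R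

/-- A bounded Lipschitz autonomous vector field has a global solution through every point. -/
theorem exists_global_solution_of_bounded_lipschitz {E : Type*} [NormedAddCommGroup E]
    [NormedSpace ℝ E] [CompleteSpace E] {f : E → E} {L K : ℝ≥0} (hb : ∀ y, ‖f y‖ ≤ L)
    (hl : LipschitzWith K f) (y₀ : E) :
    ∃ y : ℝ → E, y 0 = y₀ ∧ ∀ t, HasDerivAt y (f (y t)) t := by
  have hloc : ∀ N : ℕ, ∃ y : ℝ → E, y 0 = y₀ ∧
      ∀ t ∈ Ioo (-((N : ℝ) + 1)) (N + 1), HasDerivAt y (f (y t)) t := by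
    intro N
    have h0 : (0 : ℝ) ∈ Icc (-((N : ℝ) + 1)) (N + 1) := by
      constructor <;> linarith [N.cast_nonneg (α := ℝ)]
    have hpl : IsPicardLindelof (fun _ ↦ f) (⟨0, h0⟩ : Icc (-((N : ℝ) + 1)) (N + 1)) y₀
        (L * (N + 1)) 0 L K :=
      IsPicardLindelof.of_time_independent (fun y _ ↦ hb y) hl.lipschitzOnWith (by simp)
    obtain ⟨y, hy0, hy⟩ := hpl.exists_eq_forall_mem_Icc_hasDerivWithinAt₀
    exact ⟨y, hy0, fun t ht ↦
      (hy t (Ioo_subset_Icc_self ht)).hasDerivAt (Icc_mem_nhds ht.1 ht.2)⟩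
  choose y hy0 hy using hloc
  have hcompat : ∀ M N : ℕ, M ≤ N → ∀ t ∈ Ioo (-((M : ℝ) + 1)) (M + 1), y M t = y N t := by
    intro M N hMN
    have hMN' : (M : ℝ) ≤ N := by exact_mod_cast hMN
    have hM := M.cast_nonneg (α := ℝ)
    exact ODE_solution_unique_of_mem_Ioo (v := fun _ ↦ f) (s := fun _ ↦ univ) (K := K) (t₀ := 0)
      (fun _ _ ↦ hl.lipschitzOnWith) ⟨by linarith, by linarith⟩
      (fun t ht ↦ ⟨hy M t ht, trivial⟩)
      (fun t ht ↦ ⟨hy N t ⟨by linarith [ht.1], by linarith [ht.2]⟩, trivial⟩)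
      ((hy0 M).trans (hy0 N).symm)
  refine ⟨fun t ↦ y ⌈|t|⌉₊ t, by simpa using hy0 0, fun t ↦ ?_⟩
  set N := ⌈|t|⌉₊ + 1 with hN
  have htN : |t| + 1 ≤ N := by
    rw [hN]; push_cast; linarith [Nat.le_ceil |t|]
  have hev : (fun s ↦ y ⌈|s|⌉₊ s) =ᶠ[nhds t] y N := by
    have h1 : ∀ᶠ s : ℝ in nhds t, |s| < (N : ℝ) :=
      (continuous_abs.tendsto t).eventually (gt_mem_nhds (by linarith))
    filter_upwards [h1] with s hs
    refine hcompat _ _ (Nat.ceil_le.2 hs.le) s ?_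
    have := Nat.le_ceil |s|
    exact abs_lt.1 (by linarith)
  have hd := hy N t (abs_lt.1 (by linarith))
  have heq : y ⌈|t|⌉₊ t = y N t := hev.self_of_nhds
  exact (hd.congr_of_eventuallyEq hev).congr_deriv (congrArg f heq.symm)

/-- A solution of `u' = c u` with bounded `c` vanishes at both ends of an interval or at neither. -/
theorem eq_zero_iff_of_hasDerivAt_mul {u c : ℝ → ℝ} {a b K : ℝ} (hab : a ≤ b)
    (hu : ContinuousOn u (Icc a b)) (hd : ∀ t ∈ Ioo a b, HasDerivAt u (c t * u t) t)
    (hc : ∀ t ∈ Ioo a b, |c t| ≤ K) : u a = 0 ↔ u b = 0 := by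
  have hder : ∀ C : ℝ, ∀ t ∈ Ioo a b, HasDerivAt (fun s ↦ u s ^ 2 * exp (C * s))
      ((2 * c t + C) * (u t ^ 2 * exp (C * t))) t := by
    intro C t ht
    have h1 := ((hd t ht).pow 2).mul (((hasDerivAt_id t).const_mul C).exp)
    refine h1.congr_deriv ?_
    simp
    ring
  have hcon : ∀ C : ℝ, ContinuousOn (fun s ↦ u s ^ 2 * exp (C * s)) (Icc a b) := fun C ↦
    (hu.pow 2).mul (by fun_prop)
  have ha : a ∈ Icc a b := ⟨le_rfl, hab⟩
  have hb : b ∈ Icc a b := ⟨hab, le_rfl⟩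
  constructor
  · intro h0
    have hanti : AntitoneOn (fun s ↦ u s ^ 2 * exp (-(2 * K) * s)) (Icc a b) := by
      refine antitoneOn_of_hasDerivWithinAt_nonpos (convex_Icc a b) (hcon _)
        (fun t ht ↦ (hder _ t (interior_Icc (a := a) ▸ ht)).hasDerivWithinAt) fun t ht ↦ ?_
      rw [interior_Icc] at ht
      have := abs_le.1 (hc t ht)
      exact mul_nonpos_of_nonpos_of_nonneg (by linarith) (by positivity)
    have := hanti ha hb hab
    simp only [h0] at this
    have h2 : u b ^ 2 ≤ 0 := by
      by_contra! hpos
      have := mul_pos hpos (exp_pos (-(2 * K) * b))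
      linarith [(by simp : (0 : ℝ) ^ 2 * exp (-(2 * K) * a) = 0)]
    exact pow_eq_zero_iff two_ne_zero |>.1 (le_antisymm h2 (sq_nonneg _))
  · intro h0
    have hmono : MonotoneOn (fun s ↦ u s ^ 2 * exp ((2 * K) * s)) (Icc a b) := by
      refine monotoneOn_of_hasDerivWithinAt_nonneg (convex_Icc a b) (hcon _)
        (fun t ht ↦ (hder _ t (interior_Icc (a := a) ▸ ht)).hasDerivWithinAt) fun t ht ↦ ?_
      rw [interior_Icc] at ht
      have := abs_le.1 (hc t ht)
      exact mul_nonneg (by linarith) (by positivity)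
    have := hmono ha hb hab
    simp only [h0] at this
    have h2 : u a ^ 2 ≤ 0 := by
      by_contra! hpos
      have := mul_pos hpos (exp_pos ((2 * K) * a))
      linarith [(by simp : (0 : ℝ) ^ 2 * exp ((2 * K) * b) = 0)]
    exact pow_eq_zero_iff two_ne_zero |>.1 (le_antisymm h2 (sq_nonneg _))

namespace GoodH

variable {h h' h'' : ℝ → ℝ}

theorem continuousAt_deriv (hh : GoodH h h' h'') {d : ℝ} (hd : 0 < d) : ContinuousAt h' d :=
  (hh.deriv2 d hd).continuousAt

theorem strictMonoOn_deriv (hh : GoodH h h' h'') : StrictMonoOn h' (Ioi 0) := by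
  refine strictMonoOn_of_hasDerivWithinAt_pos (convex_Ioi 0)
    (fun d hd ↦ (hh.continuousAt_deriv hd).continuousWithinAt)
    (fun d hd ↦ (hh.deriv2 d (interior_subset hd)).hasDerivWithinAt)
    fun d hd ↦ hh.hpp_pos d (interior_subset hd)

theorem deriv_le_deriv_iff (hh : GoodH h h' h'') {a b : ℝ} (ha : 0 < a) (hb : 0 < b) :
    h' a ≤ h' b ↔ a ≤ b :=
  hh.strictMonoOn_deriv.le_iff_le ha hb

end GoodH

/-- The part `κ w^{n-1} + h'(w e^{n x})`, `n = k + 2`, of the modified Cauchy stress at strains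
`v = e^x` and `q = w v`. -/
def partialStress (k : ℕ) (κ : ℝ) (h' : ℝ → ℝ) (w x : ℝ) : ℝ :=
  κ * w ^ (k + 1) + h' (w * exp ((k + 2) * x))

/-- The modified Cauchy stress, for `n = k + 2`, at strains `v = e^x` and `q = w v`. -/
def fullStress (k : ℕ) (κ : ℝ) (h' : ℝ → ℝ) (w x : ℝ) : ℝ :=
  partialStress k κ h' w x + (k + 1) * κ * (1 / (k + 2) + x)

theorem partialStress_lt {k : ℕ} {κ : ℝ} {h h' h'' : ℝ → ℝ} (hκ : 0 < κ) (hh : GoodH h h' h'')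
    {w₁ w₂ x : ℝ} (h₁ : 0 < w₁) (h₁₂ : w₁ < w₂) :
    partialStress k κ h' w₁ x < partialStress k κ h' w₂ x := by
  have hp : w₁ ^ (k + 1) < w₂ ^ (k + 1) := pow_lt_pow_left₀ h₁₂ h₁.le (by simp)
  have hl : h' (w₁ * exp ((k + 2) * x)) ≤ h' (w₂ * exp ((k + 2) * x)) :=
    (hh.deriv_le_deriv_iff (by positivity) (mul_pos (h₁.trans h₁₂) (exp_pos _))).2
      (by gcongr)
  unfold partialStress
  nlinarith [mul_lt_mul_of_pos_left hp hκ]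

theorem partialStress_le_right {k : ℕ} {κ : ℝ} {h h' h'' : ℝ → ℝ} (hh : GoodH h h' h'')
    {w x₁ x₂ : ℝ} (hw : 0 < w) (h₁₂ : x₁ ≤ x₂) :
    partialStress k κ h' w x₁ ≤ partialStress k κ h' w x₂ := by
  have : h' (w * exp ((k + 2) * x₁)) ≤ h' (w * exp ((k + 2) * x₂)) :=
    (hh.deriv_le_deriv_iff (by positivity) (by positivity)).2 (by gcongr)
  unfold partialStress
  linarith

theorem continuousOn_partialStress {k : ℕ} {κ : ℝ} {h h' h'' : ℝ → ℝ} (hh : GoodH h h' h'')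
    {S : Set ℝ} {w x : ℝ → ℝ} (hw : ContinuousOn w S) (hx : ContinuousOn x S)
    (hpos : ∀ s ∈ S, 0 < w s) : ContinuousOn (fun s ↦ partialStress k κ h' (w s) (x s)) S := by
  have hδ : ContinuousOn (fun s ↦ w s * exp ((k + 2) * x s)) S :=
    hw.mul (continuous_exp.comp_continuousOn (continuousOn_const.mul hx))
  refine (continuousOn_const.mul (hw.pow _)).add fun s hs ↦ ?_
  exact ContinuousAt.comp_continuousWithinAt (f := fun s ↦ w s * exp ((k + 2) * x s))
    (hh.continuousAt_deriv (mul_pos (hpos s hs) (exp_pos _))) (hδ s hs)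

/-- Implicit differentiation of `partialStress k κ h' (w s) (x s)` with respect to `w`. -/
theorem hasDerivAt_of_partialStress {k : ℕ} {κ : ℝ} {h h' h'' : ℝ → ℝ} (hκ : 0 < κ)
    (hh : GoodH h h' h'') {w x : ℝ → ℝ} {s p x₁ : ℝ} (hw : ContinuousAt w s) (hpos : 0 < w s)
    (hx : HasDerivAt x x₁ s)
    (hP : HasDerivAt (fun t ↦ partialStress k κ h' (w t) (x t)) p s) :
    HasDerivAt w ((p - h'' (w s * exp ((k + 2) * x s)) *
        (w s * (exp ((k + 2) * x s) * ((k + 2) * x₁)))) /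
      (κ * ((k + 1) * w s ^ k) +
        h'' (w s * exp ((k + 2) * x s)) * exp ((k + 2) * x s))) s := by
  set e : ℝ → ℝ := fun t ↦ exp ((k + 2) * x t) with he
  have hed : HasDerivAt e (e s * ((k + 2) * x₁)) s := (hx.const_mul _).exp
  have hec : ContinuousAt e s := hed.continuousAt
  have hes : 0 < e s := exp_pos _
  have hδpos : 0 < w s * e s := mul_pos hpos hes
  have hH : Tendsto (fun t ↦ dslope h' (w s * e s) (w t * e t)) (nhds s)
      (nhds (h'' (w s * e s))) := by
    have h1 : ContinuousAt (dslope h' (w s * e s)) (w s * e s) :=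
      continuousAt_dslope_same.2 (hh.deriv2 _ hδpos).differentiableAt
    have h2 := ContinuousAt.comp (f := fun t ↦ w t * e t) (x := s) h1 (hw.mul hec)
    have h3 := h2.tendsto
    simpa [Function.comp_def, dslope_same, (hh.deriv2 _ hδpos).deriv] using h3
  have hK : Tendsto (fun t ↦ dslope (fun y : ℝ ↦ y ^ (k + 1)) (w s) (w t)) (nhds s)
      (nhds ((k + 1) * w s ^ k)) := by
    have hdp : HasDerivAt (fun y : ℝ ↦ y ^ (k + 1)) ((k + 1) * w s ^ k) (w s) := by
      simpa using hasDerivAt_pow (k + 1) (w s)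
    have h1 : ContinuousAt (dslope (fun y : ℝ ↦ y ^ (k + 1)) (w s)) (w s) :=
      continuousAt_dslope_same.2 hdp.differentiableAt
    have h3 := (ContinuousAt.comp (f := w) (x := s) h1 hw).tendsto
    simpa only [Function.comp_def, dslope_same, hdp.deriv] using h3
  have hden : 0 < κ * ((k + 1) * w s ^ k) + h'' (w s * e s) * e s := by
    have := hh.hpp_pos _ hδpos
    positivity
  have hDt : Tendsto (fun t ↦ κ * dslope (fun y : ℝ ↦ y ^ (k + 1)) (w s) (w t) +
      dslope h' (w s * e s) (w t * e t) * e t) (nhds s)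
      (nhds (κ * ((k + 1) * w s ^ k) + h'' (w s * e s) * e s)) :=
    (hK.const_mul κ).add (hH.mul hec.tendsto)
  rw [hasDerivAt_iff_tendsto_slope] at hP hed ⊢
  have hlim := (hP.sub ((hH.mono_left nhdsWithin_le_nhds).mul (hed.const_mul (w s)))).div
    (hDt.mono_left nhdsWithin_le_nhds) hden.ne'
  refine hlim.congr' ?_
  have hne : ∀ᶠ t in nhdsWithin s {s}ᶜ, 0 < κ * dslope (fun y : ℝ ↦ y ^ (k + 1)) (w s) (w t) +
      dslope h' (w s * e s) (w t * e t) * e t :=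
    (hDt.mono_left nhdsWithin_le_nhds).eventually (lt_mem_nhds hden)
  filter_upwards [hne, self_mem_nhdsWithin] with t ht hts
  have hts' : t - s ≠ 0 := sub_ne_zero.2 hts
  simp only [Pi.div_apply]
  rw [div_eq_iff ht.ne']
  have h1 := sub_smul_dslope h' (w s * e s) (w t * e t)
  have h2 := sub_smul_dslope (fun y : ℝ ↦ y ^ (k + 1)) (w s) (w t)
  simp only [smul_eq_mul] at h1 h2
  simp only [slope_def_field, partialStress]
  have h3 : h' (w t * exp ((k + 2) * x t)) = h' (w t * e t) := rfl
  have h4 : h' (w s * exp ((k + 2) * x s)) = h' (w s * e s) := rfl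
  rw [h3, h4]
  field_simp
  linear_combination (-1) * h1 - κ * h2

/-- `x = ln (r/R)` and `w = R r'/r`, as functions of `s = ln R` in `S`, describe a solution of the
modified equilibrium equation for `n = k + 2`. -/
structure StrainPath (k : ℕ) (κ : ℝ) (h' : ℝ → ℝ) (S : Set ℝ) (x w : ℝ → ℝ) : Prop where
  pos : ∀ s ∈ S, 0 < w s
  contx : ContinuousOn x S
  contw : ContinuousOn w S
  derivx : ∀ s ∈ interior S, HasDerivAt x (w s - 1) s
  derivP : ∀ s ∈ interior S, HasDerivAt (fun t ↦ partialStress k κ h' (w t) (x t))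
    ((k + 1) * κ * (1 - w s ^ (k + 2))) s

namespace StrainPath

variable {k : ℕ} {κ : ℝ} {h h' h'' : ℝ → ℝ} {S : Set ℝ} {x w : ℝ → ℝ}

theorem derivT (hp : StrainPath k κ h' S x w) {s : ℝ} (hs : s ∈ interior S) :
    HasDerivAt (fun t ↦ fullStress k κ h' (w t) (x t))
      ((k + 1) * κ * (w s * (1 - w s ^ (k + 1)))) s := by
  refine ((hp.derivP s hs).add (((hp.derivx s hs).const_add (1 / ((k : ℝ) + 2))).const_mul
    ((k + 1) * κ))).congr_deriv ?_
  ring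

theorem contT (hh : GoodH h h' h'') (hp : StrainPath k κ h' S x w) :
    ContinuousOn (fun t ↦ fullStress k κ h' (w t) (x t)) S :=
  (continuousOn_partialStress hh hp.contw hp.contx hp.pos).add
    (continuousOn_const.mul (continuousOn_const.add hp.contx))

/-- `w` solves a linear equation `w' = c (1 - w)` with a continuous positive rate. -/
theorem exists_rate (hκ : 0 < κ) (hh : GoodH h h' h'') (hp : StrainPath k κ h' S x w) :
    ∃ c : ℝ → ℝ, ContinuousOn c S ∧ (∀ s ∈ S, 0 < c s) ∧
      ∀ s ∈ interior S, HasDerivAt w (c s * (1 - w s)) s := by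
  have hec : ContinuousOn (fun s ↦ exp ((k + 2) * x s)) S :=
    continuous_exp.comp_continuousOn (continuousOn_const.mul hp.contx)
  have hδ : ∀ s ∈ S, 0 < w s * exp ((k + 2) * x s) := fun s hs ↦ mul_pos (hp.pos s hs) (exp_pos _)
  have hHc : ContinuousOn (fun s ↦ h'' (w s * exp ((k + 2) * x s))) S :=
    hh.cont2.comp (hp.contw.mul hec) hδ
  have hden : ∀ s ∈ S, 0 < κ * ((k + 1) * w s ^ k) +
      h'' (w s * exp ((k + 2) * x s)) * exp ((k + 2) * x s) := fun s hs ↦ by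
    have := hh.hpp_pos _ (hδ s hs)
    have := hp.pos s hs
    positivity
  refine ⟨fun s ↦ ((k + 1) * κ * (∑ i ∈ Finset.range (k + 2), w s ^ i) +
      h'' (w s * exp ((k + 2) * x s)) * (w s * (exp ((k + 2) * x s) * (k + 2)))) /
      (κ * ((k + 1) * w s ^ k) + h'' (w s * exp ((k + 2) * x s)) * exp ((k + 2) * x s)),
    ?_, fun s hs ↦ ?_, fun s hs ↦ ?_⟩
  · refine ContinuousOn.div ?_ ?_ fun s hs ↦ (hden s hs).ne'
    · exact (continuousOn_const.mul (continuousOn_finsetSum _ fun i _ ↦ hp.contw.pow i)).add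
        (hHc.mul (hp.contw.mul (hec.mul continuousOn_const)))
    · exact (continuousOn_const.mul (continuousOn_const.mul (hp.contw.pow k))).add (hHc.mul hec)
  · have := hh.hpp_pos _ (hδ s hs)
    have := hp.pos s hs
    have h0 : 0 < ∑ i ∈ Finset.range (k + 2), w s ^ i :=
      Finset.sum_pos (fun i _ ↦ by positivity) (by simp)
    exact div_pos (by positivity) (hden s hs)
  · have hsS := interior_subset hs
    refine (hasDerivAt_of_partialStress hκ hh (hp.contw.continuousAt (mem_interior_iff_mem_nhds.1 hs))
      (hp.pos s hsS) (hp.derivx s hs) (hp.derivP s hs)).congr_deriv ?_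
    rw [div_mul_eq_mul_div]
    congr 1
    have hg := geom_sum_mul_neg (w s) (k + 2)
    linear_combination (-((k + 1) * κ)) * hg

/-- If `w < 1` somewhere then `w < 1` everywhere: `w = 1` is an equilibrium. -/
theorem lt_one_of_exists (hκ : 0 < κ) (hh : GoodH h h' h'') (hp : StrainPath k κ h' S x w)
    (hS : S.OrdConnected) {s₀ : ℝ} (hs₀ : s₀ ∈ S) (hlt : w s₀ < 1) : ∀ s ∈ S, w s < 1 := by
  obtain ⟨c, hc, -, hd⟩ := hp.exists_rate hκ hh
  intro s hs
  by_contra! hge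
  have hsub : uIcc s₀ s ⊆ S := hS.uIcc_subset hs₀ hs
  obtain ⟨t, ht, hwt⟩ := intermediate_value_uIcc (hp.contw.mono hsub)
    (show (1 : ℝ) ∈ uIcc (w s₀) (w s) by rw [uIcc_of_le (hlt.le.trans hge)]; exact ⟨hlt.le, hge⟩)
  have key : ∀ a b : ℝ, a ≤ b → Icc a b ⊆ S → (1 - w a = 0 ↔ 1 - w b = 0) := by
    intro a b hab habS
    obtain ⟨K, hK⟩ := isCompact_Icc.exists_bound_of_continuousOn (hc.mono habS)
    have hint : Ioo a b ⊆ interior S := isOpen_Ioo.subset_interior_iff.2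
      (Ioo_subset_Icc_self.trans habS)
    refine eq_zero_iff_of_hasDerivAt_mul (u := fun s ↦ 1 - w s) (c := fun s ↦ -c s) (K := K) hab
      (continuousOn_const.sub (hp.contw.mono habS)) (fun t ht ↦ ?_) fun t ht ↦ ?_
    · refine ((hd t (hint ht)).const_sub 1).congr_deriv ?_
      ring
    · simpa using hK t (Ioo_subset_Icc_self ht)
  have htS : t ∈ S := hsub ht
  have h0 : 1 - w s₀ = 0 := by
    rcases le_total s₀ t with hle | hle
    · exact (key s₀ t hle (hS.out hs₀ htS)).2 (by linarith)
    · exact (key t s₀ hle (hS.out htS hs₀)).1 (by linarith)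
  linarith

theorem strictMonoOn_w (hκ : 0 < κ) (hh : GoodH h h' h'') (hp : StrainPath k κ h' S x w)
    (hS : Convex ℝ S) (hlt : ∀ s ∈ S, w s < 1) : StrictMonoOn w S := by
  obtain ⟨c, -, hc, hd⟩ := hp.exists_rate hκ hh
  exact strictMonoOn_of_hasDerivWithinAt_pos hS hp.contw
    (fun s hs ↦ (hd s hs).hasDerivWithinAt)
    fun s hs ↦ mul_pos (hc s (interior_subset hs)) (by linarith [hlt s (interior_subset hs)])

theorem strictAntiOn_x (hp : StrainPath k κ h' S x w)
    (hS : Convex ℝ S) (hlt : ∀ s ∈ S, w s < 1) : StrictAntiOn x S :=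
  strictAntiOn_of_hasDerivWithinAt_neg hS hp.contx
    (fun s hs ↦ (hp.derivx s hs).hasDerivWithinAt)
    fun s hs ↦ by linarith [hlt s (interior_subset hs)]

theorem strictMonoOn_T (hκ : 0 < κ) (hh : GoodH h h' h'') (hp : StrainPath k κ h' S x w)
    (hS : Convex ℝ S) (hlt : ∀ s ∈ S, w s < 1) :
    StrictMonoOn (fun t ↦ fullStress k κ h' (w t) (x t)) S :=
  strictMonoOn_of_hasDerivWithinAt_pos hS (hp.contT hh)
    (fun s hs ↦ (hp.derivT hs).hasDerivWithinAt) fun s hs ↦ by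
      have h1 := hp.pos s (interior_subset hs)
      have h2 : w s ^ (k + 1) < 1 := pow_lt_one₀ h1.le (hlt s (interior_subset hs)) (by simp)
      have : 0 < 1 - w s ^ (k + 1) := by linarith
      positivity

/-- If the stress vanishes and the strain `e^x` blows up as `s → -∞`, then `w → 0`. -/
theorem tendsto_w_atBot (hκ : 0 < κ) (hh : GoodH h h' h'') (hp : StrainPath k κ h' (Iic 0) x w)
    (hx : Tendsto x atBot atTop)
    (hT : Tendsto (fun t ↦ fullStress k κ h' (w t) (x t)) atBot (nhds 0)) :
    Tendsto w atBot (nhds 0) := by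
  have hlin : Tendsto (fun s ↦ ((k : ℝ) + 1) * κ * (1 / (k + 2) + x s)) atBot atTop :=
    (tendsto_atTop_add_const_left _ _ hx).const_mul_atTop (by positivity)
  have hexp : Tendsto (fun s ↦ exp (-((k + 2) * x s))) atBot (nhds 0) :=
    tendsto_exp_neg_atTop_nhds_zero.comp (hx.const_mul_atTop (by positivity : (0 : ℝ) < k + 2))
  refine tendsto_of_tendsto_of_tendsto_of_le_of_le' tendsto_const_nhds hexp ?_ ?_
  · filter_upwards [eventually_le_atBot 0] with s hs using (hp.pos s hs).le
  · filter_upwards [eventually_le_atBot 0, hT.eventually (gt_mem_nhds one_pos),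
      hlin.eventually_ge_atTop (1 - h' 1)] with s hs h1 h2
    have hw := hp.pos s hs
    have h3 : h' (w s * exp ((k + 2) * x s)) < h' 1 := by
      unfold fullStress partialStress at h1
      have : 0 < κ * w s ^ (k + 1) := by positivity
      linarith
    have h4 : w s * exp ((k + 2) * x s) < 1 :=
      (hh.strictMonoOn_deriv.lt_iff_lt (mul_pos hw (exp_pos _)) (mem_Ioi.2 one_pos)).1 h3
    rw [exp_neg, ← one_div, le_div_iff₀ (exp_pos _)]
    exact h4.le

end StrainPath

/-- At equal `w`, the stress minus `(n - 1) κ x` is a monotone function of `x`. -/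
theorem fullStress_sub_mul_nonneg {k : ℕ} {κ : ℝ} {h h' h'' : ℝ → ℝ} (hh : GoodH h h' h'')
    {w : ℝ} (hw : 0 < w) (x₁ x₂ : ℝ) :
    0 ≤ (fullStress k κ h' w x₁ - fullStress k κ h' w x₂ - (k + 1) * κ * (x₁ - x₂)) *
      (x₁ - x₂) := by
  unfold fullStress
  rcases le_total x₁ x₂ with hle | hle
  · have := partialStress_le_right (k := k) (κ := κ) hh hw hle
    exact mul_nonneg_of_nonpos_of_nonpos (by linarith) (by linarith)
  · have := partialStress_le_right (k := k) (κ := κ) hh hw hle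
    exact mul_nonneg (by linarith) (by linarith)

namespace StrainPath

variable {k : ℕ} {κ : ℝ} {h h' h'' : ℝ → ℝ}

/-- The range of `w` being all of `(0, 1)`, it has a continuous inverse there. -/
theorem exists_inverse {w : ℝ → ℝ} (hw : StrictMono w) (hc : Continuous w)
    (hmem : ∀ s, w s ∈ Ioo (0 : ℝ) 1) (h0 : Tendsto w atBot (nhds 0))
    (h1 : Tendsto w atTop (nhds 1)) :
    ∃ g : ℝ → ℝ, (∀ y ∈ Ioo (0 : ℝ) 1, w (g y) = y) ∧
      ∀ y ∈ Ioo (0 : ℝ) 1, ContinuousAt g y := by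
  have hex : ∀ y, y ∈ Ioo (0 : ℝ) 1 → ∃ t, w t = y := fun y hy ↦
    mem_range_of_exists_le_of_exists_ge hc
      ((h0.eventually (gt_mem_nhds hy.1)).exists.imp fun _ ht ↦ ht.le)
      ((h1.eventually (lt_mem_nhds hy.2)).exists.imp fun _ ht ↦ ht.le)
  choose! g hg using hex
  have hgw : ∀ s, g (w s) = s := fun s ↦ hw.injective (hg _ (hmem s))
  refine ⟨g, hg, fun y hy ↦ ?_⟩
  have hmono : StrictMonoOn g (Ioo 0 1) := fun a ha b hb hab ↦ by
    rw [← hw.lt_iff_lt, hg a ha, hg b hb]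
    exact hab
  refine hmono.continuousAt_of_image_mem_nhds (Ioo_mem_nhds hy.1 hy.2) ?_
  have : g '' Ioo 0 1 = univ := eq_univ_of_forall fun s ↦ ⟨w s, hmem s, hgw s⟩
  rw [this]
  exact univ_mem

/-- Two cavitating paths with vanishing stress at the cavity agree up to a shift of `s`. -/
theorem exists_shift {xe we xl wl : ℝ → ℝ} (hκ : 0 < κ) (hh : GoodH h h' h'')
    (he : StrainPath k κ h' univ xe we) (he_lt : ∀ s, we s < 1)
    (he_bot : Tendsto we atBot (nhds 0)) (he_top : Tendsto we atTop (nhds 1))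
    (heT : Tendsto (fun t ↦ fullStress k κ h' (we t) (xe t)) atBot (nhds 0))
    (hl : StrainPath k κ h' (Iic 0) xl wl) (hl_lt : ∀ s ∈ Iic (0 : ℝ), wl s < 1)
    (hl_bot : Tendsto wl atBot (nhds 0))
    (hlT : Tendsto (fun t ↦ fullStress k κ h' (wl t) (xl t)) atBot (nhds 0)) :
    ∃ a, ∀ s ≤ 0, xl s = xe (s + a) := by
  have hwe : StrictMono we := strictMonoOn_univ.1
    (he.strictMonoOn_w hκ hh convex_univ fun s _ ↦ he_lt s)
  have hwec : Continuous we := continuousOn_univ.1 he.contw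
  have hxec : Continuous xe := continuousOn_univ.1 he.contx
  have hTec : Continuous (fun t ↦ fullStress k κ h' (we t) (xe t)) :=
    continuousOn_univ.1 (he.contT hh)
  obtain ⟨g, hwg, hgc⟩ := exists_inverse hwe hwec (fun s ↦ ⟨he.pos s trivial, he_lt s⟩)
    he_bot he_top
  obtain ⟨ce, -, hce, hde⟩ := he.exists_rate hκ hh
  obtain ⟨cl, -, hcl, hdl⟩ := hl.exists_rate hκ hh
  rw [interior_univ] at hde
  rw [interior_Iic] at hdl
  have hmem : ∀ s ∈ Iic (0 : ℝ), wl s ∈ Ioo (0 : ℝ) 1 := fun s hs ↦ ⟨hl.pos s hs, hl_lt s hs⟩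
  set τ : ℝ → ℝ := fun s ↦ g (wl s) with hτ
  have hwτ : ∀ s ∈ Iic (0 : ℝ), we (τ s) = wl s := fun s hs ↦ hwg _ (hmem s hs)
  have hτc : ContinuousOn τ (Iic 0) := fun s hs ↦
    ContinuousAt.comp_continuousWithinAt (hgc _ (hmem s hs)) (hl.contw s hs)
  have hτd : ∀ s ∈ Iio (0 : ℝ), ∃ d, HasDerivAt τ d s := by
    intro s hs
    have hs' : s ∈ Iic (0 : ℝ) := mem_Iic.2 (le_of_lt hs)
    have h1 := HasDerivAt.of_local_left_inverse (hgc _ (hmem s hs')) (hde (τ s) trivial)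
      (mul_pos (hce _ trivial) (by linarith [he_lt (τ s)])).ne'
      (Filter.eventually_of_mem (Ioo_mem_nhds (hmem s hs').1 (hmem s hs').2) hwg)
    exact ⟨_, HasDerivAt.comp s h1 (hdl s hs)⟩
  have hτbot : Tendsto τ atBot atBot := by
    refine tendsto_atBot.2 fun b ↦ ?_
    filter_upwards [hl_bot.eventually (gt_mem_nhds (he.pos b trivial)),
      eventually_le_atBot 0] with s hs hs0
    rw [← hwe.le_iff_le, hwτ s hs0]
    exact hs.le
  set X : ℝ → ℝ := fun s ↦ xl s - xe (τ s) with hX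
  set D : ℝ → ℝ := fun s ↦
    fullStress k κ h' (wl s) (xl s) - fullStress k κ h' (we (τ s)) (xe (τ s)) with hD
  set μ : ℝ := (k + 1) * κ with hμ
  have hμpos : 0 < μ := by positivity
  have hXc : ContinuousOn X (Iic 0) := hl.contx.sub (hxec.comp_continuousOn hτc)
  have hDc : ContinuousOn D (Iic 0) := (hl.contT hh).sub (hTec.comp_continuousOn hτc)
  have hXd : ∀ s ∈ Iio (0 : ℝ), ∀ d, HasDerivAt τ d s →
      HasDerivAt X ((wl s - 1) - (we (τ s) - 1) * d) s := fun s hs d hd ↦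
    (hl.derivx s (by rwa [interior_Iic])).sub
      (HasDerivAt.comp s (he.derivx (τ s) (by simp)) hd)
  have hDX : ∀ s ∈ Iic (0 : ℝ), 0 ≤ (D s - μ * X s) * X s := by
    intro s hs
    have := fullStress_sub_mul_nonneg (k := k) (κ := κ) hh (hl.pos s hs) (xl s) (xe (τ s))
    simpa only [hD, hX, hwτ s hs] using this
  have hD0 : Tendsto D atBot (nhds 0) := by simpa using hlT.sub (heT.comp hτbot)
  have hX0 : Tendsto X atBot (nhds 0) := by
    have hb : Tendsto (fun s ↦ |D s| / μ) atBot (nhds 0) := by simpa using hD0.abs.div_const μ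
    refine squeeze_zero_norm' ?_ hb
    filter_upwards [eventually_le_atBot 0] with s hs
    have h1 := hDX s hs
    rw [Real.norm_eq_abs, le_div_iff₀ hμpos]
    by_contra! h2
    have h3 : 0 < |X s| := by
      by_contra! h4
      nlinarith [abs_nonneg (D s)]
    have h5 : D s * X s ≤ |D s| * |X s| := by rw [← abs_mul]; exact le_abs_self _
    nlinarith [abs_mul_abs_self (X s)]
  set G : ℝ → ℝ := fun y ↦ ∑ i ∈ Finset.range (k + 1), y ^ (i + 1) with hG
  set G' : ℝ → ℝ := fun y ↦ ∑ i ∈ Finset.range (k + 1), ((i : ℝ) + 1) * y ^ i with hG'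
  set C : ℝ := ∑ i ∈ Finset.range (k + 1), ((i : ℝ) + 1) with hC
  have hGd : ∀ y, HasDerivAt G (G' y) y := fun y ↦
    HasDerivAt.fun_sum fun i _ ↦ by simpa using hasDerivAt_pow (i + 1) y
  have hGc : Continuous G := by fun_prop
  have hGmul : ∀ y, G y * (1 - y) = y * (1 - y ^ (k + 1)) := fun y ↦ by
    have := geom_sum_mul_neg y (k + 1)
    rw [← this, ← mul_assoc, Finset.mul_sum]
    congr 1
    exact Finset.sum_congr rfl fun i _ ↦ by ring
  have hGnn : ∀ y, 0 < y → 0 ≤ G y := fun y hy ↦ Finset.sum_nonneg fun i _ ↦ by positivity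
  have hG'C : ∀ y ∈ Ioo (0 : ℝ) 1, G' y ≤ C := fun y hy ↦ Finset.sum_le_sum fun i _ ↦ by
    have : y ^ i ≤ 1 := pow_le_one₀ hy.1.le hy.2.le
    nlinarith [i.cast_nonneg (α := ℝ)]
  set M : ℝ → ℝ := fun s ↦ D s + μ * G (wl s) * X s with hM
  have hMd : ∀ s ∈ Iio (0 : ℝ), HasDerivAt M (μ * G' (wl s) * (cl s * (1 - wl s)) * X s) s := by
    intro s hs
    have hs' : s ∈ Iic (0 : ℝ) := mem_Iic.2 (le_of_lt hs)
    obtain ⟨d, hd⟩ := hτd s hs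
    have hi : s ∈ interior (Iic (0 : ℝ)) := by rwa [interior_Iic]
    have hDd := (hl.derivT hi).sub (HasDerivAt.comp s (he.derivT (s := τ s) (by simp)) hd)
    have hGd' := HasDerivAt.comp s (hGd (wl s)) (hdl s hs)
    refine (hDd.add ((hGd'.const_mul μ).mul (hXd s hs d hd))).congr_deriv ?_
    rw [hwτ s hs']
    simp only [Function.comp]
    linear_combination (-(μ * (1 - d))) * hGmul (wl s)
  have hMc : ContinuousOn M (Iic 0) :=
    hDc.add ((continuousOn_const.mul (hGc.comp_continuousOn hl.contw)).mul hXc)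
  have hM0 : Tendsto M atBot (nhds 0) := by
    have := hD0.add (((hGc.tendsto 0).comp hl_bot).const_mul μ |>.mul hX0)
    simpa using this
  have hMX : ∀ s ∈ Iic (0 : ℝ), μ * X s ^ 2 ≤ M s * X s := by
    intro s hs
    have h1 := hDX s hs
    have h2 := hGnn _ (hl.pos s hs)
    have h3 : 0 ≤ μ * G (wl s) * X s ^ 2 := by positivity
    simp only [hM]
    nlinarith
  have hMM : ∀ s ∈ Iic (0 : ℝ), μ * X s * M s ≤ M s ^ 2 := by
    intro s hs
    have h1 := hDX s hs
    have h2 := hGnn _ (hl.pos s hs)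
    have h3 := hMX s hs
    have h4 : 0 ≤ (M s - μ * X s) * X s := by
      have h3 : 0 ≤ μ * G (wl s) * X s ^ 2 := by positivity
      simp only [hM]
      nlinarith
    rcases eq_or_ne (X s) 0 with h0 | h0
    · rw [h0]; simpa using sq_nonneg (M s)
    · have h5 : 0 < X s ^ 2 := by positivity
      have h6 : 0 ≤ M s * X s := le_trans (by positivity) h3
      have h7 : 0 ≤ (M s ^ 2 - μ * X s * M s) * X s ^ 2 := by nlinarith [mul_nonneg h4 h6]
      linarith [nonneg_of_mul_nonneg_left h7 h5]
  have hanti : AntitoneOn (fun s ↦ M s ^ 2 * exp (-(2 * C * wl s))) (Iic 0) := by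
    refine antitoneOn_of_hasDerivWithinAt_nonpos
      (f' := fun s ↦ 2 * (cl s * (1 - wl s)) * exp (-(2 * C * wl s)) *
        (G' (wl s) * (μ * X s * M s) - C * M s ^ 2)) (convex_Iic 0)
      ((hMc.pow 2).mul (continuous_exp.comp_continuousOn (continuousOn_const.mul hl.contw).neg))
      (fun s hs ↦ ?_) fun s hs ↦ ?_
    · rw [interior_Iic] at hs
      refine (((hMd s hs).pow 2).mul
        (((hdl s hs).const_mul (2 * C)).neg.exp)).hasDerivWithinAt.congr_deriv ?_
      push_cast
      simp only [Pi.pow_apply, Pi.neg_apply]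
      ring
    · rw [interior_Iic] at hs
      have hs' : s ∈ Iic (0 : ℝ) := mem_Iic.2 (le_of_lt hs)
      have h1 := hcl s hs'
      have h2 : 0 < 1 - wl s := by linarith [hl_lt s hs']
      refine mul_nonpos_of_nonneg_of_nonpos (by positivity) ?_
      have h3 : 0 ≤ μ * X s * M s := by nlinarith [hMX s hs', mul_nonneg hμpos.le (sq_nonneg (X s))]
      nlinarith [mul_le_mul_of_nonneg_right (hG'C _ (hmem s hs')) h3,
        mul_le_mul_of_nonneg_left (hMM s hs') (show 0 ≤ C from
          Finset.sum_nonneg fun i _ ↦ by positivity)]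
  have hlim : Tendsto (fun s ↦ M s ^ 2 * exp (-(2 * C * wl s))) atBot (nhds 0) := by
    have := (hM0.pow 2).mul ((continuous_exp.tendsto _).comp ((hl_bot.const_mul (2 * C)).neg))
    simpa using this
  have hXz : ∀ s ∈ Iic (0 : ℝ), X s = 0 := by
    intro s hs
    have h1 : M s ^ 2 * exp (-(2 * C * wl s)) ≤ 0 := by
      refine ge_of_tendsto hlim ?_
      filter_upwards [eventually_le_atBot s] with t ht using hanti (le_trans ht hs) hs ht
    have h2 : M s ^ 2 ≤ 0 := nonpos_of_mul_nonpos_left h1 (exp_pos _)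
    have h3 : M s = 0 := pow_eq_zero_iff two_ne_zero |>.1 (le_antisymm h2 (sq_nonneg _))
    have h4 := hMX s hs
    rw [h3, zero_mul] at h4
    have h5 : X s ^ 2 ≤ 0 := nonpos_of_mul_nonpos_right h4 hμpos
    exact pow_eq_zero_iff two_ne_zero |>.1 (le_antisymm h5 (sq_nonneg _))
  have hτ1 : ∀ s ∈ Iio (0 : ℝ), HasDerivAt (fun t ↦ τ t - t) 0 s := by
    intro s hs
    have hs' : s ∈ Iic (0 : ℝ) := mem_Iic.2 (le_of_lt hs)
    obtain ⟨d, hd⟩ := hτd s hs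
    have hXd0 : HasDerivAt X 0 s := (hasDerivAt_const s (0 : ℝ)).congr_of_eventuallyEq
      (Filter.eventually_of_mem (Iic_mem_nhds hs) hXz)
    have h0 := (hXd s hs d hd).unique hXd0
    rw [hwτ s hs'] at h0
    have h1 : wl s - 1 ≠ 0 := (sub_neg.2 (hl_lt s hs')).ne
    have h2 : d = 1 := mul_left_cancel₀ h1 (by linarith)
    refine (hd.sub (hasDerivAt_id s)).congr_deriv ?_
    rw [h2, sub_self]
  have hcon : ContinuousOn (fun t ↦ τ t - t) (Iic 0) := hτc.sub continuousOn_id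
  have hle := monotoneOn_of_hasDerivWithinAt_nonneg (convex_Iic (0 : ℝ)) hcon
    (f' := fun _ ↦ 0) (fun s hs ↦ (hτ1 s (by rwa [interior_Iic] at hs)).hasDerivWithinAt)
    fun _ _ ↦ le_rfl
  have hge := antitoneOn_of_hasDerivWithinAt_nonpos (convex_Iic (0 : ℝ)) hcon
    (f' := fun _ ↦ 0) (fun s hs ↦ (hτ1 s (by rwa [interior_Iic] at hs)).hasDerivWithinAt)
    fun _ _ ↦ le_rfl
  refine ⟨τ 0, fun s hs ↦ ?_⟩
  have h0 : (0 : ℝ) ∈ Iic (0 : ℝ) := mem_Iic.2 le_rfl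
  have h1 : τ s - s = τ 0 - 0 := le_antisymm (hle hs h0 hs) (hge hs h0 hs)
  have h2 : xl s - xe (τ s) = 0 := hXz s hs
  have h3 : τ s = s + τ 0 := by linarith
  rw [← h3]
  linarith

end StrainPath

/-- Solving `partialStress k κ h' w x = P` for `w`, truncated to `[w₀, 1]`. -/
theorem exists_truncated_root {k : ℕ} {κ : ℝ} {h h' h'' : ℝ → ℝ} (hh : GoodH h h' h'')
    {w₀ : ℝ} (h0 : 0 < w₀) (h1 : w₀ < 1) (P x : ℝ) :
    ∃ w ∈ Icc w₀ 1, (w₀ < w → partialStress k κ h' w x ≤ P) ∧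
      (w < 1 → P ≤ partialStress k κ h' w x) := by
  rcases le_or_gt P (partialStress k κ h' w₀ x) with hP | hP
  · exact ⟨w₀, ⟨le_rfl, h1.le⟩, fun hlt ↦ absurd hlt (lt_irrefl _), fun _ ↦ hP⟩
  rcases le_or_gt (partialStress k κ h' 1 x) P with hP' | hP'
  · exact ⟨1, ⟨h1.le, le_rfl⟩, fun _ ↦ hP', fun hlt ↦ absurd hlt (lt_irrefl _)⟩
  have hc : ContinuousOn (fun w ↦ partialStress k κ h' w x) (Icc w₀ 1) :=
    continuousOn_partialStress hh continuousOn_id continuousOn_const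
      fun s hs ↦ lt_of_lt_of_le h0 hs.1
  obtain ⟨w, hw, hwP⟩ := intermediate_value_Icc h1.le hc ⟨hP.le, hP'.le⟩
  exact ⟨w, hw, fun _ ↦ hwP.le, fun _ ↦ hwP.ge⟩

/-- The truncated root of `partialStress k κ h' w x = P` is Lipschitz in `(P, x)`. -/
theorem truncated_root_sub_le {k : ℕ} {κ : ℝ} {h h' h'' : ℝ → ℝ} (hκ : 0 < κ)
    (hh : GoodH h h' h'') {w₀ w₁ w₂ P₁ P₂ x₁ x₂ : ℝ} (h0 : 0 < w₀) (hw₁ : w₁ ∈ Icc w₀ 1)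
    (hw₂ : w₂ ∈ Icc w₀ 1) (hP₁ : w₀ < w₁ → partialStress k κ h' w₁ x₁ ≤ P₁)
    (hP₂ : w₂ < 1 → P₂ ≤ partialStress k κ h' w₂ x₂) :
    w₁ - w₂ ≤ (κ * w₀ ^ k)⁻¹ * |P₁ - P₂| + (k + 2) * |x₁ - x₂| := by
  have hκ0 : 0 < κ * w₀ ^ k := by positivity
  rcases le_or_gt w₁ w₂ with hle | hlt
  · have : 0 ≤ (κ * w₀ ^ k)⁻¹ * |P₁ - P₂| + (k + 2) * |x₁ - x₂| := by positivity
    linarith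
  have hp₂ : 0 < w₂ := h0.trans_le hw₂.1
  have hp₁ : 0 < w₁ := hp₂.trans hlt
  have h1 := hP₁ (hw₂.1.trans_lt hlt)
  have h2 := hP₂ (hlt.trans_le hw₁.2)
  have hx0 : 0 ≤ ((k : ℝ) + 2) * |x₁ - x₂| := by positivity
  rcases le_or_gt (w₂ * exp ((k + 2) * x₂)) (w₁ * exp ((k + 2) * x₁)) with hδ | hδ
  · have h3 := (hh.deriv_le_deriv_iff (by positivity) (by positivity)).2 hδ
    have h4 : κ * (w₁ ^ (k + 1) - w₂ ^ (k + 1)) ≤ P₁ - P₂ := by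
      unfold partialStress at h1 h2
      linarith
    have h5 : w₀ ^ k * (w₁ - w₂) ≤ w₁ ^ (k + 1) - w₂ ^ (k + 1) := by
      have h6 : w₀ ^ k ≤ w₁ ^ k := pow_le_pow_left₀ h0.le hw₁.1 k
      have h7 : w₂ ^ k ≤ w₁ ^ k := pow_le_pow_left₀ hp₂.le hlt.le k
      rw [pow_succ, pow_succ]
      nlinarith
    have h8 : w₁ - w₂ ≤ (κ * w₀ ^ k)⁻¹ * |P₁ - P₂| := by
      rw [inv_mul_eq_div, le_div_iff₀ hκ0]
      nlinarith [le_abs_self (P₁ - P₂), mul_le_mul_of_nonneg_left h5 hκ.le]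
    linarith
  · have h3 : log w₁ + (k + 2) * x₁ < log w₂ + (k + 2) * x₂ := by
      have := log_lt_log (by positivity) hδ
      rwa [log_mul hp₁.ne' (exp_pos _).ne', log_mul hp₂.ne' (exp_pos _).ne', log_exp,
        log_exp] at this
    have h4 : 1 - w₂ / w₁ ≤ log w₁ - log w₂ := by
      have := log_le_sub_one_of_pos (div_pos hp₂ hp₁)
      rw [log_div hp₂.ne' hp₁.ne'] at this
      linarith
    have h5 : w₁ - w₂ ≤ 1 - w₂ / w₁ := by
      have : 1 - w₂ / w₁ = (w₁ - w₂) / w₁ := by field_simp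
      rw [this, le_div_iff₀ hp₁]
      nlinarith [hw₁.2]
    have h6 : ((k : ℝ) + 2) * (x₂ - x₁) ≤ (k + 2) * |x₁ - x₂| := by
      rw [abs_sub_comm]
      gcongr
      exact le_abs_self _
    have h7 : 0 ≤ (κ * w₀ ^ k)⁻¹ * |P₁ - P₂| := by positivity
    linarith

/-- The modified equilibrium equation can be solved on `[0, ∞)` from any strains with `w < 1`. -/
theorem exists_strainPath_Ici {k : ℕ} {κ : ℝ} {h h' h'' : ℝ → ℝ} (hκ : 0 < κ)
    (hh : GoodH h h' h'') {w₀ : ℝ} (h0 : 0 < w₀) (h1 : w₀ < 1) (x₀ : ℝ) :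
    ∃ x w : ℝ → ℝ, StrainPath k κ h' (Ici 0) x w ∧ (∀ s ∈ Ici (0 : ℝ), w s < 1) ∧
      x 0 = x₀ ∧ w 0 = w₀ := by
  choose W hWmem hWlo hWhi using exists_truncated_root (k := k) (κ := κ) hh h0 h1
  have hWlip : ∀ y z : ℝ × ℝ, |W y.1 y.2 - W z.1 z.2| ≤
      ((κ * w₀ ^ k)⁻¹ + (k + 2)) * ‖y - z‖ := by
    intro y z
    have hb : (κ * w₀ ^ k)⁻¹ * |y.1 - z.1| + (k + 2) * |y.2 - z.2| ≤
        ((κ * w₀ ^ k)⁻¹ + (k + 2)) * ‖y - z‖ := by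
      rw [add_mul _ _ ‖y - z‖]
      exact add_le_add (mul_le_mul_of_nonneg_left (norm_fst_le (y - z)) (by positivity))
        (mul_le_mul_of_nonneg_left (norm_snd_le (y - z)) (by positivity))
    have h2 := truncated_root_sub_le hκ hh h0 (hWmem y.1 y.2) (hWmem z.1 z.2) (hWlo y.1 y.2)
      (hWhi z.1 z.2)
    have h3 := truncated_root_sub_le hκ hh h0 (hWmem z.1 z.2) (hWmem y.1 y.2) (hWlo z.1 z.2)
      (hWhi y.1 y.2)
    rw [abs_sub_comm z.1, abs_sub_comm z.2] at h3
    exact abs_sub_le_iff.2 ⟨h2.trans hb, h3.trans hb⟩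
  have hWpos : ∀ P x, 0 < W P x := fun P x ↦ h0.trans_le (hWmem P x).1
  set μ : ℝ := (k + 1) * κ with hμ
  have hμpos : 0 < μ := by positivity
  set F : ℝ × ℝ → ℝ × ℝ := fun y ↦ (μ * (1 - W y.1 y.2 ^ (k + 2)), W y.1 y.2 - 1) with hF
  have hFb : ∀ y, ‖F y‖ ≤ ((μ.toNNReal + 1 : ℝ≥0) : ℝ) := by
    intro y
    have hW := hWmem y.1 y.2
    have hW0 := hWpos y.1 y.2
    have hp1 : W y.1 y.2 ^ (k + 2) ≤ 1 := pow_le_one₀ hW0.le hW.2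
    have hp0 : 0 < W y.1 y.2 ^ (k + 2) := by positivity
    rw [NNReal.coe_add, Real.coe_toNNReal _ hμpos.le, NNReal.coe_one]
    refine max_le ?_ ?_
    · rw [Real.norm_eq_abs, abs_of_nonneg (mul_nonneg hμpos.le (by linarith))]
      nlinarith
    · rw [Real.norm_eq_abs, abs_le]
      constructor <;> linarith [hW.2]
  have hFl : ∃ K : ℝ≥0, LipschitzWith K F := by
    have hC : 0 ≤ (κ * w₀ ^ k)⁻¹ + ((k : ℝ) + 2) := by positivity
    refine ⟨((μ * (k + 2) + 1) * ((κ * w₀ ^ k)⁻¹ + (k + 2))).toNNReal,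
      LipschitzWith.of_dist_le_mul fun y z ↦ ?_⟩
    rw [Real.coe_toNNReal _ (by positivity), dist_eq_norm, dist_eq_norm]
    have hWl := hWlip y z
    set C := (κ * w₀ ^ k)⁻¹ + ((k : ℝ) + 2)
    have hCn : 0 ≤ C * ‖y - z‖ := by positivity
    have hpow : |W y.1 y.2 ^ (k + 2) - W z.1 z.2 ^ (k + 2)| ≤
        (k + 2) * |W y.1 y.2 - W z.1 z.2| := by
      have h2 := abs_pow_sub_pow_le (W y.1 y.2) (W z.1 z.2) (k + 2)
      have h3 : max |W y.1 y.2| |W z.1 z.2| ^ (k + 1) ≤ 1 := by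
        refine pow_le_one₀ (by positivity) (max_le ?_ ?_)
        · rw [abs_of_pos (hWpos _ _)]; exact (hWmem _ _).2
        · rw [abs_of_pos (hWpos _ _)]; exact (hWmem _ _).2
      push_cast at h2
      refine h2.trans ?_
      have : 0 ≤ |W y.1 y.2 - W z.1 z.2| * ((k : ℝ) + 2) := by positivity
      rw [mul_comm ((k : ℝ) + 2)]
      exact mul_le_of_le_one_right this h3
    refine max_le ?_ ?_
    · have : (F y - F z).1 = -(μ * (W y.1 y.2 ^ (k + 2) - W z.1 z.2 ^ (k + 2))) := by
        simp only [hF, Prod.fst_sub]; ring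
      rw [this, norm_neg, Real.norm_eq_abs, abs_mul, abs_of_pos hμpos]
      calc μ * |W y.1 y.2 ^ (k + 2) - W z.1 z.2 ^ (k + 2)|
          ≤ μ * ((k + 2) * (C * ‖y - z‖)) := by
            gcongr
            exact hpow.trans (by gcongr)
        _ ≤ (μ * (k + 2) + 1) * C * ‖y - z‖ := by linarith
    · have : (F y - F z).2 = W y.1 y.2 - W z.1 z.2 := by
        simp only [hF, Prod.snd_sub]; ring
      rw [this, Real.norm_eq_abs]
      have : 0 ≤ μ * (k + 2) * (C * ‖y - z‖) := by positivity
      linarith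
  obtain ⟨K, hFl⟩ := hFl
  obtain ⟨y, hy0, hy⟩ := exists_global_solution_of_bounded_lipschitz hFb hFl
    (partialStress k κ h' w₀ x₀, x₀)
  have hyc : Continuous y := continuous_iff_continuousAt.2 fun t ↦ (hy t).continuousAt
  have hPd : ∀ t, HasDerivAt (fun s ↦ (y s).1) (μ * (1 - W (y t).1 (y t).2 ^ (k + 2))) t :=
    fun t ↦ (hy t).fst
  have hxd : ∀ t, HasDerivAt (fun s ↦ (y s).2) (W (y t).1 (y t).2 - 1) t :=
    fun t ↦ (hy t).snd
  have hWc : Continuous (fun s ↦ W (y s).1 (y s).2) := by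
    have : LipschitzWith ((κ * w₀ ^ k)⁻¹ + (k + 2)).toNNReal (fun z : ℝ × ℝ ↦ W z.1 z.2) :=
      LipschitzWith.of_dist_le_mul fun y z ↦ by
        rw [Real.coe_toNNReal _ (by positivity), dist_eq_norm, dist_eq_norm]
        exact hWlip y z
    exact this.continuous.comp hyc
  have hW0 : W (y 0).1 (y 0).2 = w₀ := by
    rw [hy0]
    by_contra hne
    have hlt := lt_of_le_of_ne (hWmem (partialStress k κ h' w₀ x₀) x₀).1 (Ne.symm hne)
    have h2 := hWlo _ _ hlt
    have h3 := partialStress_lt (k := k) (x := x₀) hκ hh h0 hlt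
    linarith
  have hWlt : ∀ t ∈ Ici (0 : ℝ), W (y t).1 (y t).2 < 1 := by
    intro t ht
    by_contra! hge
    have hW1 : W (y t).1 (y t).2 = 1 := le_antisymm (hWmem _ _).2 hge
    have hconst : ∀ s, HasDerivAt (fun _ : ℝ ↦ y t) (F (y t)) s := fun s ↦ by
      have : F (y t) = 0 := by simp [hF, hW1]
      rw [this]
      exact hasDerivAt_const s _
    have heq := ODE_solution_unique_univ (v := fun _ ↦ F) (s := fun _ ↦ univ) (K := K) (t₀ := t)
      (fun _ ↦ hFl.lipschitzOnWith) (fun s ↦ ⟨hy s, trivial⟩) (fun s ↦ ⟨hconst s, trivial⟩) rfl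
    have h2 : y 0 = y t := congrFun heq 0
    rw [← h2, hW0] at hW1
    exact h1.ne hW1
  have hPmono : Monotone (fun s ↦ (y s).1) := monotone_of_hasDerivAt_nonneg hPd fun s ↦ by
    have := pow_le_one₀ (n := k + 2) (hWpos (y s).1 (y s).2).le (hWmem _ _).2
    exact mul_nonneg hμpos.le (by linarith)
  have hxanti : Antitone (fun s ↦ (y s).2) := antitone_of_hasDerivAt_nonpos hxd fun s ↦ by
    simpa using (hWmem (y s).1 (y s).2).2
  have hPeq : ∀ t ∈ Ici (0 : ℝ), partialStress k κ h' (W (y t).1 (y t).2) (y t).2 = (y t).1 := by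
    intro t ht
    refine le_antisymm ?_ (hWhi _ _ (hWlt t ht))
    rcases (hWmem (y t).1 (y t).2).1.lt_or_eq with hlt | heq
    · exact hWlo _ _ hlt
    · rw [← heq]
      have h2 : (y 0).1 ≤ (y t).1 := hPmono ht
      have h3 : (y t).2 ≤ (y 0).2 := hxanti ht
      rw [hy0] at h2 h3
      exact (partialStress_le_right hh h0 h3).trans h2
  refine ⟨fun s ↦ (y s).2, fun s ↦ W (y s).1 (y s).2,
    ⟨fun s _ ↦ hWpos _ _, (continuous_snd.comp hyc).continuousOn, hWc.continuousOn,
      fun s _ ↦ hxd s, fun s hs ↦ ?_⟩, hWlt, congrArg Prod.snd hy0, hW0⟩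
  exact (hPd s).congr_of_eventuallyEq
    (Filter.eventually_of_mem (mem_interior_iff_mem_nhds.1 hs) hPeq)

/-- Paths on `(-∞, 0]` and `[0, ∞)` with matching strains at `0` glue to a path on `ℝ`. -/
theorem StrainPath.glue {k : ℕ} {κ : ℝ} {h h' h'' : ℝ → ℝ} (hh : GoodH h h' h'')
    {x₁ w₁ x₂ w₂ : ℝ → ℝ} (hp₁ : StrainPath k κ h' (Iic 0) x₁ w₁)
    (hp₂ : StrainPath k κ h' (Ici 0) x₂ w₂) (hx : x₁ 0 = x₂ 0) (hw : w₁ 0 = w₂ 0) :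
    StrainPath k κ h' univ (fun s ↦ if s ≤ 0 then x₁ s else x₂ s)
      (fun s ↦ if s ≤ 0 then w₁ s else w₂ s) := by
  set x : ℝ → ℝ := fun s ↦ if s ≤ 0 then x₁ s else x₂ s with hxdef
  set w : ℝ → ℝ := fun s ↦ if s ≤ 0 then w₁ s else w₂ s with hwdef
  have hglue : ∀ {f g : ℝ → ℝ}, ContinuousOn f (Iic 0) → ContinuousOn g (Ici 0) → f 0 = g 0 →
      Continuous (fun s ↦ if s ≤ 0 then f s else g s) := fun hf hg hfg ↦
    continuous_if_le continuous_id continuous_const hf hg fun s hs ↦ by rw [hs]; exact hfg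
  have hxc : Continuous x := hglue hp₁.contx hp₂.contx hx
  have hwc : Continuous w := hglue hp₁.contw hp₂.contw hw
  have hpos : ∀ s, 0 < w s := by
    intro s
    rcases le_or_gt s 0 with hs | hs
    · simpa only [hwdef, if_pos hs] using hp₁.pos s hs
    · simpa only [hwdef, if_neg hs.not_ge] using hp₂.pos s hs.le
  have hPc : Continuous (fun s ↦ partialStress k κ h' (w s) (x s)) := continuousOn_univ.1
    (continuousOn_partialStress hh hwc.continuousOn hxc.continuousOn fun s _ ↦ hpos s)
  have hlo : ∀ s < 0, x =ᶠ[nhds s] x₁ ∧ w =ᶠ[nhds s] w₁ := fun s hs ↦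
    ⟨Filter.eventually_of_mem (Iio_mem_nhds hs) fun t ht ↦ if_pos (le_of_lt ht),
      Filter.eventually_of_mem (Iio_mem_nhds hs) fun t ht ↦ if_pos (le_of_lt ht)⟩
  have hhi : ∀ s > 0, x =ᶠ[nhds s] x₂ ∧ w =ᶠ[nhds s] w₂ := fun s hs ↦
    ⟨Filter.eventually_of_mem (Ioi_mem_nhds hs) fun t ht ↦ if_neg (not_le.2 ht),
      Filter.eventually_of_mem (Ioi_mem_nhds hs) fun t ht ↦ if_neg (not_le.2 ht)⟩
  have hPev : ∀ {s : ℝ} {x' w' : ℝ → ℝ}, x =ᶠ[nhds s] x' → w =ᶠ[nhds s] w' →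
      (fun t ↦ partialStress k κ h' (w t) (x t)) =ᶠ[nhds s]
        fun t ↦ partialStress k κ h' (w' t) (x' t) := fun h1 h2 ↦ by
    filter_upwards [h1, h2] with t ht1 ht2
    rw [ht1, ht2]
  refine ⟨fun s _ ↦ hpos s, hxc.continuousOn, hwc.continuousOn, fun s _ ↦ ?_, fun s _ ↦ ?_⟩
  · refine hasDerivAt_of_hasDerivAt_of_ne' (x := 0) (g := fun s ↦ w s - 1) (fun t ht ↦ ?_)
      hxc.continuousAt (hwc.sub continuous_const).continuousAt s
    rcases lt_or_gt_of_ne ht with ht | ht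
    · obtain ⟨h1, h2⟩ := hlo t ht
      rw [h2.self_of_nhds]
      exact (hp₁.derivx t (by simpa using ht)).congr_of_eventuallyEq h1
    · obtain ⟨h1, h2⟩ := hhi t ht
      rw [h2.self_of_nhds]
      exact (hp₂.derivx t (by simpa using ht)).congr_of_eventuallyEq h1
  · refine hasDerivAt_of_hasDerivAt_of_ne' (x := 0)
      (g := fun s ↦ (k + 1) * κ * (1 - w s ^ (k + 2))) (fun t ht ↦ ?_)
      hPc.continuousAt (by fun_prop) s
    rcases lt_or_gt_of_ne ht with ht | ht
    · obtain ⟨h1, h2⟩ := hlo t ht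
      rw [h2.self_of_nhds]
      exact (hp₁.derivP t (by simpa using ht)).congr_of_eventuallyEq (hPev h1 h2)
    · obtain ⟨h1, h2⟩ := hhi t ht
      rw [h2.self_of_nhds]
      exact (hp₂.derivP t (by simpa using ht)).congr_of_eventuallyEq (hPev h1 h2)

theorem exp_natCast_add_two_mul_log (k : ℕ) {v : ℝ} (hv : 0 < v) :
    exp ((k + 2) * log v) = v ^ (k + 2) := by
  rw [mul_comm, ← rpow_def_of_pos hv]
  exact_mod_cast rpow_natCast v (k + 2)

theorem stretch_mul_pow_eq (k : ℕ) (q : ℝ) {v : ℝ} (hv : 0 < v) :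
    q / v * exp ((k + 2) * log v) = q * v ^ (k + 1) := by
  rw [exp_natCast_add_two_mul_log k hv]
  field_simp
  ring

theorem THat_eq_fullStress (k : ℕ) (κ : ℝ) (h' : ℝ → ℝ) (q : ℝ) {v : ℝ} (hv : 0 < v) :
    THat (k + 2) κ h' q v = fullStress k κ h' (q / v) (log v) := by
  rw [THat, fullStress, partialStress, stretch_mul_pow_eq k q hv]
  push_cast
  ring

theorem PhiHat1_eq_fullStress (k : ℕ) (κ : ℝ) (h' : ℝ → ℝ) (q : ℝ) {v : ℝ} (hv : 0 < v) :
    PhiHat1 (k + 2) κ h' q v = v ^ (k + 1) * fullStress k κ h' (q / v) (log v) := by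
  rw [PhiHat1, fullStress, partialStress, stretch_mul_pow_eq k q hv, div_pow]
  push_cast
  field_simp
  ring

theorem PhiHat2_eq_fullStress (k : ℕ) (κ : ℝ) (h' : ℝ → ℝ) (q : ℝ) {v : ℝ} (hv : 0 < v) :
    PhiHat2 (k + 2) κ h' q v =
      q * v ^ k * (fullStress k κ h' (q / v) (log v) + κ * (1 - (q / v) ^ (k + 1))) := by
  rw [PhiHat2, fullStress, partialStress, stretch_mul_pow_eq k q hv]
  push_cast
  ring

/-- In the variables `s = ln R`, `x = ln (r / R)`, `w = R r' / r`, a solution of the modified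
equilibrium equation on `(0, 1]` is a path on `(-∞, 0]`. -/
theorem ModRadialSol.strainPath {k : ℕ} {κ : ℝ} {h' r r' r'' : ℝ → ℝ}
    (hr : ModRadialSol (k + 2) κ h' r r' r'') :
    StrainPath k κ h' (Iic 0) (fun s ↦ log (r (exp s) / exp s))
      (fun s ↦ r' (exp s) / (r (exp s) / exp s)) := by
  have hmem : ∀ s ∈ Iic (0 : ℝ), exp s ∈ Ioc (0 : ℝ) 1 := fun s hs ↦
    ⟨exp_pos s, exp_le_one_iff.2 hs⟩
  have hvpos : ∀ s ∈ Iic (0 : ℝ), 0 < r (exp s) / exp s := fun s hs ↦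
    div_pos (hr.pos _ (hmem s hs)) (exp_pos s)
  have hec : ContinuousOn exp (Iic 0) := continuous_exp.continuousOn
  have hrc : ContinuousOn (fun s ↦ r (exp s)) (Iic 0) :=
    ContinuousOn.comp (fun R hR ↦ (hr.hasDeriv R hR).continuousWithinAt) hec hmem
  have hrc' : ContinuousOn (fun s ↦ r' (exp s)) (Iic 0) :=
    ContinuousOn.comp (fun R hR ↦ (hr.hasDeriv2 R hR).continuousWithinAt) hec hmem
  have hvc : ContinuousOn (fun s ↦ r (exp s) / exp s) (Iic 0) :=
    hrc.div hec fun s _ ↦ (exp_pos s).ne'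
  have hnhds : ∀ s ∈ interior (Iic (0 : ℝ)), Ioc (0 : ℝ) 1 ∈ nhds (exp s) := fun s hs ↦ by
    rw [interior_Iic] at hs
    exact Ioc_mem_nhds (exp_pos s) (exp_lt_one_iff.2 hs)
  have hrd : ∀ s ∈ interior (Iic (0 : ℝ)),
      HasDerivAt (fun s ↦ r (exp s)) (r' (exp s) * exp s) s := fun s hs ↦
    ((hr.hasDeriv _ (hmem s (interior_subset hs))).hasDerivAt (hnhds s hs)).comp s
      (Real.hasDerivAt_exp s)
  have hxd : ∀ s ∈ interior (Iic (0 : ℝ)), HasDerivAt (fun s ↦ log (r (exp s) / exp s))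
      (r' (exp s) / (r (exp s) / exp s) - 1) s := fun s hs ↦ by
    have hr0 := hr.pos _ (hmem s (interior_subset hs))
    refine (((hrd s hs).div (Real.hasDerivAt_exp s) (exp_pos s).ne').log
      (hvpos s (interior_subset hs)).ne').congr_deriv ?_
    have := exp_pos s
    rw [Pi.div_apply]
    field_simp
  refine ⟨fun s hs ↦ div_pos (hr.derivPos _ (hmem s hs)) (hvpos s hs),
    hvc.log fun s hs ↦ (hvpos s hs).ne', hrc'.div hvc fun s hs ↦ (hvpos s hs).ne', hxd,
    fun s hs ↦ ?_⟩
  have hs' := interior_subset hs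
  have hr0 := hr.pos _ (hmem s hs')
  have he0 := exp_pos s
  have hFd := ((hr.equil _ (hmem s hs')).hasDerivAt (hnhds s hs)).comp s (Real.hasDerivAt_exp s)
  have hPd := (hFd.div ((hrd s hs).pow (k + 1)) (pow_pos hr0 _).ne').sub
    (((hxd s hs).const_add (1 / ((k : ℝ) + 2))).const_mul ((k + 1) * κ))
  have hF : ∀ t ∈ Iic (0 : ℝ), exp t ^ (k + 1) *
      PhiHat1 (k + 2) κ h' (r' (exp t)) (r (exp t) / exp t) = r (exp t) ^ (k + 1) *
        fullStress k κ h' (r' (exp t) / (r (exp t) / exp t)) (log (r (exp t) / exp t)) := by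
    intro t ht
    rw [PhiHat1_eq_fullStress k κ h' _ (hvpos t ht), ← mul_assoc, ← mul_pow,
      mul_div_cancel₀ _ (exp_pos t).ne']
  refine (hPd.congr_of_eventuallyEq ?_).congr_deriv ?_
  · filter_upwards [mem_interior_iff_mem_nhds.1 hs] with t ht
    have hr1 := hr.pos _ (hmem t ht)
    simp only [Pi.sub_apply, Pi.div_apply, Pi.pow_apply, Function.comp_apply,
      show k + 2 - 1 = k + 1 from rfl]
    rw [hF t ht, mul_div_cancel_left₀ _ (pow_pos hr1 _).ne', fullStress]
    ring
  · simp only [Function.comp_apply, show k + 2 - 1 = k + 1 from rfl,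
      show k + 2 - 2 = k from rfl, Pi.pow_apply]
    rw [hF s hs', PhiHat2_eq_fullStress k κ h' _ (hvpos s hs')]
    set T := fullStress k κ h' (r' (exp s) / (r (exp s) / exp s)) (log (r (exp s) / exp s))
    push_cast
    simp only [div_pow]
    field_simp
    ring

/-- The cavity condition in the variable `s = ln R`. -/
theorem ModRadialSol.tendsto_fullStress {k : ℕ} {κ : ℝ} {h' r r' r'' : ℝ → ℝ}
    (hr : ModRadialSol (k + 2) κ h' r r' r'')
    (hT : Tendsto (fun R => THat (k + 2) κ h' (r' R) (r R / R))
      (nhdsWithin 0 (Set.Ioi 0)) (nhds 0)) :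
    Tendsto (fun s ↦ fullStress k κ h' (r' (exp s) / (r (exp s) / exp s))
      (log (r (exp s) / exp s))) atBot (nhds 0) := by
  refine (hT.comp tendsto_exp_atBot_nhdsGT).congr' ?_
  filter_upwards [eventually_le_atBot 0] with s hs
  exact THat_eq_fullStress k κ h' _
    (div_pos (hr.pos _ ⟨exp_pos s, exp_le_one_iff.2 hs⟩) (exp_pos s))

namespace StrainPath

variable {k : ℕ} {κ : ℝ} {h h' h'' : ℝ → ℝ} {x w : ℝ → ℝ}

/-- Along a path with `w < 1` the radial strain ratio `w` tends to `1` at infinity. -/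
theorem tendsto_w_atTop (hκ : 0 < κ) (hh : GoodH h h' h'') (hp : StrainPath k κ h' univ x w)
    (hlt : ∀ s, w s < 1) : Tendsto w atTop (nhds 1) := by
  have hmono : StrictMono w :=
    strictMonoOn_univ.1 (hp.strictMonoOn_w hκ hh convex_univ fun s _ ↦ hlt s)
  have hanti : StrictAnti x :=
    strictAntiOn_univ.1 (hp.strictAntiOn_x convex_univ fun s _ ↦ hlt s)
  have hpos : ∀ s, 0 < w s := fun s ↦ hp.pos s trivial
  have hbdd : BddAbove (range w) := ⟨1, by rintro _ ⟨s, rfl⟩; exact (hlt s).le⟩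
  have hlim := tendsto_atTop_ciSup hmono.monotone hbdd
  have hle : ∀ s, w s ≤ ⨆ t, w t := le_ciSup hbdd
  set L := ⨆ t, w t
  have hL1 : L ≤ 1 := ciSup_le fun s ↦ (hlt s).le
  rcases hL1.lt_or_eq with hL | hL
  swap
  · rwa [hL] at hlim
  exfalso
  have hL0 : 0 ≤ L := (hpos 0).le.trans (hle 0)
  set c := (k + 1) * κ * (1 - L ^ (k + 2)) with hc
  have hcpos : 0 < c := by
    have : 0 < 1 - L ^ (k + 2) := by linarith [pow_lt_one₀ hL0 hL (n := k + 2) (by simp)]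
    positivity
  have hP : Monotone (fun s ↦ partialStress k κ h' (w s) (x s) - c * s) := by
    refine monotone_of_hasDerivAt_nonneg (fun s ↦ (hp.derivP s (by simp)).sub
      ((hasDerivAt_id s).const_mul c)) fun s ↦ ?_
    have h1 : w s ^ (k + 2) ≤ L ^ (k + 2) := pow_le_pow_left₀ (hpos s).le (hle s) _
    have h2 : 0 ≤ (k + 1) * κ * (L ^ (k + 2) - w s ^ (k + 2)) :=
      mul_nonneg (by positivity) (by linarith)
    simp only [Pi.zero_apply, mul_one, hc]
    linarith
  have hB : ∀ s, 0 ≤ s → partialStress k κ h' (w s) (x s) ≤ partialStress k κ h' 1 (x 0) :=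
    fun s hs ↦ (partialStress_lt hκ hh (hpos s) (hlt s)).le.trans
      (partialStress_le_right hh one_pos (hanti.antitone hs))
  set t := (partialStress k κ h' 1 (x 0) - partialStress k κ h' (w 0) (x 0)) / c + 1 with ht
  have ht0 : 0 ≤ t := add_nonneg (div_nonneg (by linarith [hB 0 le_rfl]) hcpos.le) zero_le_one
  have h1 := hP ht0
  have h2 := hB t ht0
  have h3 : c * t = partialStress k κ h' 1 (x 0) - partialStress k κ h' (w 0) (x 0) + c := by
    rw [ht]; field_simp
  simp only [mul_zero, sub_zero] at h1
  linarith

/-- Along a path with `w < 1` the tangential strain `e^x` has a limit at infinity, which exceeds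
`1` if the reference configuration is stress free and the stress vanishes at `-∞`. -/
theorem exists_tendsto_x_atTop (hκ : 0 < κ) (hh : GoodH h h' h'')
    (hfree : fullStress k κ h' 1 0 = 0) (hp : StrainPath k κ h' univ x w) (hlt : ∀ s, w s < 1)
    (hT : Tendsto (fun t ↦ fullStress k κ h' (w t) (x t)) atBot (nhds 0)) :
    ∃ xc, 0 < xc ∧ Tendsto x atTop (nhds xc) := by
  have hanti : StrictAnti x :=
    strictAntiOn_univ.1 (hp.strictAntiOn_x convex_univ fun s _ ↦ hlt s)
  have hTmono : StrictMono (fun t ↦ fullStress k κ h' (w t) (x t)) :=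
    strictMonoOn_univ.1 (hp.strictMonoOn_T hκ hh convex_univ fun s _ ↦ hlt s)
  have hpos : ∀ s, 0 < w s := fun s ↦ hp.pos s trivial
  have hP : Monotone (fun s ↦ partialStress k κ h' (w s) (x s)) := by
    refine monotone_of_hasDerivAt_nonneg (fun s ↦ hp.derivP s (by simp)) fun s ↦ ?_
    have := pow_le_one₀ (n := k + 2) (hpos s).le (hlt s).le
    exact mul_nonneg (by positivity) (by linarith)
  have hbdd : BddBelow (range x) := by
    obtain ⟨ε, hε, hεh⟩ := mem_nhdsGT_iff_exists_Ioo_subset.1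
      (hh.dlim_zero.eventually_lt_atBot (partialStress k κ h' (w 0) (x 0) - κ))
    refine ⟨min (x 0) (log ε / (k + 2)), ?_⟩
    rintro _ ⟨s, rfl⟩
    rcases le_total s 0 with hs | hs
    · exact min_le_of_left_le (hanti.antitone hs)
    refine min_le_of_right_le ?_
    by_contra! hx
    have h1 : exp ((k + 2) * x s) < ε := by
      rw [lt_div_iff₀ (by positivity)] at hx
      rw [← exp_log hε]
      exact exp_lt_exp.2 (by linarith)
    have h2 : h' (exp ((k + 2) * x s)) < partialStress k κ h' (w 0) (x 0) - κ :=
      hεh ⟨exp_pos _, h1⟩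
    have h3 := (hP hs).trans (partialStress_lt (k := k) (x := x s) hκ hh (hpos s) (hlt s)).le
    simp only [partialStress, one_pow, mul_one, one_mul] at h2 h3
    linarith
  refine ⟨⨅ s, x s, ?_, tendsto_atTop_ciInf hanti.antitone hbdd⟩
  have hlim := tendsto_atTop_ciInf hanti.antitone hbdd
  set xc := ⨅ s, x s
  have h1 : 0 ≤ fullStress k κ h' (w (-1)) (x (-1)) := by
    refine le_of_tendsto hT ?_
    filter_upwards [eventually_le_atBot (-1)] with s hs using hTmono.monotone hs
  have h2 : fullStress k κ h' (w (-1)) (x (-1)) < fullStress k κ h' (w 0) (x 0) :=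
    hTmono (by norm_num)
  have hcont : Continuous (fun y ↦ fullStress k κ h' 1 y) :=
    (continuousOn_univ.1 (continuousOn_partialStress hh continuousOn_const continuousOn_id
      fun _ _ ↦ one_pos)).add (by fun_prop)
  have h3 : fullStress k κ h' (w 0) (x 0) ≤ fullStress k κ h' 1 xc := by
    refine ge_of_tendsto ((hcont.tendsto xc).comp hlim) ?_
    filter_upwards [eventually_ge_atTop 0] with s hs
    exact (hTmono.monotone hs).trans (by
      have := partialStress_lt (k := k) (x := x s) hκ hh (hpos s) (hlt s)
      simp only [Function.comp_apply, fullStress]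
      linarith)
  by_contra! hxc
  have h4 : fullStress k κ h' 1 xc ≤ fullStress k κ h' 1 0 := by
    have h5 := partialStress_le_right (k := k) (κ := κ) hh one_pos hxc
    have h6 : ((k : ℝ) + 1) * κ * xc ≤ 0 := mul_nonpos_of_nonneg_of_nonpos (by positivity) hxc
    unfold fullStress
    linarith
  linarith

/-- A path on `(-∞, 0]` whose stress vanishes at `-∞` and with tangential strain `e^x > 1` at `0`
satisfies `w < 1`. -/
theorem lt_one_of_pos (hκ : 0 < κ) (hh : GoodH h h' h'')
    (hfree : fullStress k κ h' 1 0 = 0) (hp : StrainPath k κ h' (Iic 0) x w) (hx : 0 < x 0)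
    (hT : Tendsto (fun t ↦ fullStress k κ h' (w t) (x t)) atBot (nhds 0)) :
    ∀ s ∈ Iic (0 : ℝ), w s < 1 := by
  suffices ∃ s ∈ Iic (0 : ℝ), w s < 1 by
    obtain ⟨s, hs, hws⟩ := this
    exact hp.lt_one_of_exists hκ hh ordConnected_Iic hs hws
  by_contra! hge
  have hanti : AntitoneOn (fun t ↦ fullStress k κ h' (w t) (x t)) (Iic 0) :=
    antitoneOn_of_hasDerivWithinAt_nonpos (convex_Iic 0) (hp.contT hh)
      (fun s hs ↦ (hp.derivT hs).hasDerivWithinAt) fun s hs ↦ by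
        have h1 := one_le_pow₀ (n := k + 1) (hge s (interior_subset hs))
        have h2 := hp.pos s (interior_subset hs)
        exact mul_nonpos_of_nonneg_of_nonpos (by positivity)
          (mul_nonpos_of_nonneg_of_nonpos h2.le (by linarith))
  have h1 : fullStress k κ h' (w 0) (x 0) ≤ 0 := by
    refine ge_of_tendsto hT ?_
    filter_upwards [eventually_le_atBot 0] with s hs
    exact hanti hs self_mem_Iic hs
  have h2 : partialStress k κ h' 1 0 ≤ partialStress k κ h' (w 0) (x 0) := by
    refine (partialStress_le_right hh one_pos hx.le).trans ?_
    rcases (hge 0 self_mem_Iic).lt_or_eq with hlt | heq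
    · exact (partialStress_lt hκ hh one_pos hlt).le
    · rw [← heq]
  have h3 : 0 < ((k : ℝ) + 1) * κ * x 0 := by positivity
  unfold fullStress at h1 hfree
  linarith

/-- Along a path on `(-∞, 0]` with `w < 1`, the tangential strain `e^x` blows up at `-∞`. -/
theorem tendsto_x_atBot (hκ : 0 < κ) (hh : GoodH h h' h'') (hp : StrainPath k κ h' (Iic 0) x w)
    (hlt : ∀ s ∈ Iic (0 : ℝ), w s < 1) : Tendsto x atBot atTop := by
  have hw := (hp.strictMonoOn_w hκ hh (convex_Iic 0) hlt).monotoneOn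
  have hc : 0 < 1 - w 0 := by linarith [hlt 0 self_mem_Iic]
  have hanti : AntitoneOn (fun s ↦ x s + (1 - w 0) * s) (Iic 0) :=
    antitoneOn_of_hasDerivWithinAt_nonpos (convex_Iic 0) (hp.contx.add (by fun_prop))
      (fun s hs ↦ ((hp.derivx s hs).add ((hasDerivAt_id s).const_mul (1 - w 0))).hasDerivWithinAt)
      fun s hs ↦ by
        have hs' := interior_subset hs
        have := hw hs' self_mem_Iic hs'
        linarith
  refine tendsto_atTop_mono' _ ?_ (tendsto_atTop_add_const_left _ (x 0)
    (tendsto_neg_atBot_atTop.const_mul_atTop hc))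
  filter_upwards [eventually_le_atBot 0] with s hs
  have : x 0 + (1 - w 0) * 0 ≤ x s + (1 - w 0) * s := hanti hs self_mem_Iic hs
  linarith

/-- A path on `ℝ` yields a deformation `R e^{x (ln R)}` of `(0, ∞)`. -/
theorem hasDerivAt_deformation (hp : StrainPath k κ h' univ x w) {R : ℝ} (hR : 0 < R) :
    HasDerivAt (fun R ↦ R * exp (x (log R))) (exp (x (log R)) * w (log R)) R := by
  have h1 := (hp.derivx (log R) (by simp)).comp R (hasDerivAt_log hR.ne')
  refine ((hasDerivAt_id R).mul h1.exp).congr_deriv ?_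
  simp only [id, Function.comp_apply]
  field_simp
  ring

/-- The deformation of a path on `ℝ` solves the modified equilibrium equation. -/
theorem equil_deformation (hp : StrainPath k κ h' univ x w) {R : ℝ} (hR : 0 < R) :
    HasDerivAt (fun s ↦ s ^ (k + 1) * PhiHat1 (k + 2) κ h' (exp (x (log s)) * w (log s))
        (s * exp (x (log s)) / s))
      ((k + 1) * R ^ k * PhiHat2 (k + 2) κ h' (exp (x (log R)) * w (log R))
        (R * exp (x (log R)) / R)) R := by
  have hT := (hp.derivT (s := log R) (by simp)).comp R (hasDerivAt_log hR.ne')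
  have hF := ((hp.hasDerivAt_deformation hR).pow (k + 1)).mul hT
  refine (hF.congr_of_eventuallyEq ?_).congr_deriv ?_
  · filter_upwards [Ioi_mem_nhds hR] with s hs
    have hs : 0 < s := hs
    rw [mul_div_cancel_left₀ _ hs.ne', PhiHat1_eq_fullStress k κ h' _ (exp_pos _), log_exp,
      mul_div_cancel_left₀ _ (exp_pos _).ne', ← mul_assoc, ← mul_pow]
    rfl
  · rw [mul_div_cancel_left₀ _ hR.ne', PhiHat2_eq_fullStress k κ h' _ (exp_pos _), log_exp,
      mul_div_cancel_left₀ _ (exp_pos _).ne']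
    simp only [Function.comp_apply, Pi.pow_apply, show k + 1 - 1 = k from rfl]
    push_cast
    field_simp
    ring

end StrainPath

/-- a cavitating solution of the modified equilibrium equation with
`T̂ → 0` at the cavity extends uniquely to a solution on `(0,∞)` with `r' < r/R`;
its strains converge to a critical boundary displacement `λ_c > 1` at infinity, and
every solution with `T̂ → 0` and boundary value `λ > λ_c` is the rescaling
`r_λ(R) = r_c(αR)/α`, where `α` is the unique solution of `r_c(α)/α = λ`. -/
theorem stmt19 (n : ℕ) (hn : 2 ≤ n) (κ : ℝ) (hκ : 0 < κ)
    (h h' h'' : ℝ → ℝ) (hh : GoodH h h' h'')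
    (hstressfree : PhiHat1 n κ h' 1 1 = 0)
    (rc rc' rc'' : ℝ → ℝ) (hrc : ModRadialSol n κ h' rc rc' rc'')
    (hcont : ContinuousOn rc (Set.Icc 0 1)) (hcav : 0 < rc 0)
    (hT0 : Tendsto (fun R => THat n κ h' (rc' R) (rc R / R))
      (nhdsWithin 0 (Set.Ioi 0)) (nhds 0)) :
    ∃ re re' : ℝ → ℝ,
      (∀ R ∈ Set.Ioc (0:ℝ) 1, re R = rc R) ∧
      (∀ R ∈ Set.Ioi (0:ℝ), 0 < re R ∧ 0 < re' R ∧ HasDerivAt re (re' R) R) ∧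
      (∀ R ∈ Set.Ioi (0:ℝ),
        HasDerivAt (fun s => s ^ (n - 1) * PhiHat1 n κ h' (re' s) (re s / s))
          (((n:ℝ) - 1) * R ^ (n - 2) * PhiHat2 n κ h' (re' R) (re R / R)) R) ∧
      (∀ R ∈ Set.Ioi (0:ℝ), re' R < re R / R) ∧
      ∃ lamc : ℝ, 1 < lamc ∧
        Tendsto re' atTop (nhds lamc) ∧
        Tendsto (fun R => re R / R) atTop (nhds lamc) ∧
        ∀ lam : ℝ, lamc < lam →
          ∀ rl rl' rl'' : ℝ → ℝ, ModRadialSol n κ h' rl rl' rl'' →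
            Tendsto (fun R => THat n κ h' (rl' R) (rl R / R))
              (nhdsWithin 0 (Set.Ioi 0)) (nhds 0) →
            rl 1 = lam →
            ∃ α : ℝ, 0 < α ∧ re α / α = lam ∧
              (∀ β : ℝ, 0 < β → re β / β = lam → β = α) ∧
              ∀ R ∈ Set.Ioc (0:ℝ) 1, rl R = re (α * R) / α := by
  obtain ⟨k, rfl⟩ : ∃ k, n = k + 2 := ⟨n - 2, by omega⟩
  have hfree : fullStress k κ h' 1 0 = 0 := by
    simpa [PhiHat1_eq_fullStress k κ h' 1 one_pos] using hstressfree
  obtain ⟨x, w, hp, hlt, hbot, hT, hx⟩ : ∃ x w : ℝ → ℝ, StrainPath k κ h' univ x w ∧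
      (∀ s, w s < 1) ∧ Tendsto w atBot (nhds 0) ∧
      Tendsto (fun t ↦ fullStress k κ h' (w t) (x t)) atBot (nhds 0) ∧
      ∀ s ≤ 0, x s = log (rc (exp s) / exp s) := by
    have hp₁ := hrc.strainPath
    have hT₁ := hrc.tendsto_fullStress hT0
    have hx₁ : Tendsto (fun s ↦ log (rc (exp s) / exp s)) atBot atTop := by
      have hc : Tendsto rc (nhdsWithin 0 (Ioi 0)) (nhds (rc 0)) :=
        ((hcont 0 ⟨le_rfl, zero_le_one⟩).mono Ioo_subset_Icc_self).mono_left
          (nhdsWithin_Ioo_eq_nhdsGT one_pos).ge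
      have hd : Tendsto (fun R ↦ rc R / R) (nhdsWithin 0 (Ioi 0)) atTop :=
        hc.pos_mul_atTop hcav tendsto_inv_nhdsGT_zero
      exact tendsto_log_atTop.comp (hd.comp tendsto_exp_atBot_nhdsGT)
    have hbot₁ := hp₁.tendsto_w_atBot hκ hh hx₁ hT₁
    obtain ⟨s₀, hs₀, hlt₀⟩ :=
      ((eventually_le_atBot 0).and (hbot₁.eventually (gt_mem_nhds one_pos))).exists
    have hlt₁ := hp₁.lt_one_of_exists hκ hh ordConnected_Iic hs₀ hlt₀
    obtain ⟨x₂, w₂, hp₂, hlt₂, hx₂, hw₂⟩ := exists_strainPath_Ici (k := k) hκ hh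
      (hp₁.pos 0 self_mem_Iic) (hlt₁ 0 self_mem_Iic) (log (rc (exp 0) / exp 0))
    refine ⟨_, _, hp₁.glue hh hp₂ hx₂.symm hw₂.symm, fun s ↦ ?_, hbot₁.congr' ?_, hT₁.congr' ?_,
      fun s hs ↦ if_pos hs⟩
    · split_ifs with hs
      · exact hlt₁ s hs
      · exact hlt₂ s (not_le.1 hs).le
    · filter_upwards [eventually_le_atBot 0] with s hs
      rw [if_pos hs]
    · filter_upwards [eventually_le_atBot 0] with s hs
      rw [if_pos hs, if_pos hs]
  have hpos : ∀ s, 0 < w s := fun s ↦ hp.pos s trivial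
  have htop := hp.tendsto_w_atTop hκ hh hlt
  have hanti : StrictAnti x :=
    strictAntiOn_univ.1 (hp.strictAntiOn_x convex_univ fun s _ ↦ hlt s)
  obtain ⟨xc, hxc, hlim⟩ := hp.exists_tendsto_x_atTop hκ hh hfree hlt hT
  have hexp : Tendsto (fun R ↦ exp (x (log R))) atTop (nhds (exp xc)) :=
    (continuous_exp.tendsto xc).comp (hlim.comp tendsto_log_atTop)
  refine ⟨fun R ↦ R * exp (x (log R)), fun R ↦ exp (x (log R)) * w (log R), fun R hR ↦ ?_,
    fun R hR ↦ ⟨mul_pos hR (exp_pos _), mul_pos (exp_pos _) (hpos _),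
      hp.hasDerivAt_deformation hR⟩, fun R hR ↦ ?_, fun R hR ↦ ?_, exp xc,
    one_lt_exp_iff.2 hxc, ?_, hexp.congr' ?_, ?_⟩
  · have hr := hrc.pos R hR
    have hR0 : 0 < R := hR.1
    simp only [hx (log R) (log_nonpos hR.1.le hR.2)]
    rw [exp_log hR.1, exp_log (div_pos hr hR.1), mul_div_cancel₀ _ hR0.ne']
  · refine (hp.equil_deformation hR).congr_deriv ?_
    push_cast
    ring
  · have hR0 : 0 < R := hR
    simp only [mul_div_cancel_left₀ _ hR0.ne']
    exact mul_lt_of_lt_one_right (exp_pos _) (hlt _)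
  · simpa using hexp.mul (htop.comp tendsto_log_atTop)
  · filter_upwards [eventually_gt_atTop 0] with R hR
    rw [mul_div_cancel_left₀ _ hR.ne']
  intro lam hlam rl rl' rl'' hrl hTl hrl1
  have hl := hrl.strainPath
  have hlT := hrl.tendsto_fullStress hTl
  have hlam0 : 0 < lam := (exp_pos xc).trans hlam
  have hxl : xc < log (rl (exp 0) / exp 0) := by
    rw [exp_zero, div_one, hrl1]
    exact (lt_log_iff_exp_lt hlam0).2 hlam
  have hl_lt := hl.lt_one_of_pos hκ hh hfree (hxc.trans hxl) hlT
  have hl_bot := hl.tendsto_w_atBot hκ hh (hl.tendsto_x_atBot hκ hh hl_lt) hlT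
  obtain ⟨a, ha⟩ := hp.exists_shift hκ hh hlt hbot htop hT hl hl_lt hl_bot hlT
  have hxa : exp (x a) = lam := by
    have := ha 0 le_rfl
    rw [exp_zero, div_one, hrl1, zero_add] at this
    rw [← this, exp_log hlam0]
  refine ⟨exp a, exp_pos a, ?_, fun β hβ hβl ↦ ?_, fun R hR ↦ ?_⟩
  · simp only [mul_div_cancel_left₀ _ (exp_pos a).ne', log_exp, hxa]
  · simp only [mul_div_cancel_left₀ _ hβ.ne', ← hxa] at hβl
    rw [← hanti.injective (exp_injective hβl), exp_log hβ]
  · have hR0 : 0 < R := hR.1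
    have := ha (log R) (log_nonpos hR.1.le hR.2)
    rw [exp_log hR.1] at this
    simp only [log_mul (exp_pos a).ne' hR0.ne', log_exp, add_comm a]
    rw [← this, exp_log (div_pos (hrl.pos R hR) hR0)]
    have := exp_pos a
    field_simp

end
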